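/- arXiv:2411.02111 — 3 statements merged into one kernel-verified Lean document; each statement's English description precedes it below -/
import Mathlib

section
/- Let G be a finite connected multigraph with all edge lengths equal to 1. Then for any vertices p, q, s of G: j_p(q,s) = ( t(G_{pq}) + t(G_{ps}) − t(G_{qs}) ) / (2·t(G)). -/
open scoped Classical

/-- A finite weighted multigraph (resistive electrical network): finitely many
vertices and edges; each edge `e` has two endpoints `ends e` and a positive
length (resistance) `len e`.  Multiple edges and self-loops are allowed. -/
structure WMG where
  V : Type
  E : Type
  instV : Fintype V
  instE : Fintype E
  ends : E → V × V
  len : E → ℝ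
  len_pos : ∀ e, 0 < len e

attribute [instance] WMG.instV WMG.instE

/-- The Moore–Penrose pseudoinverse of a real square matrix, characterized by
the four Penrose equations (it exists and is unique for real matrices). -/
noncomputable def Matrix.mpinv {n : Type} [Fintype n] (A : Matrix n n ℝ) : Matrix n n ℝ :=
  if h : ∃ B : Matrix n n ℝ,
      A * B * A = A ∧ B * A * B = B ∧ Matrix.transpose (A * B) = A * B ∧ Matrix.transpose (B * A) = B * A
  then h.choose else 0

namespace WMG

/-- Indicator function. -/
noncomputable def ind {α : Type} (x y : α) : ℝ := if x = y then 1 else 0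

/-- The weighted Laplacian: an edge `e` with endpoints `a, b` contributes
`(1/len e) * (δ_{ua} - δ_{ub}) * (δ_{va} - δ_{vb})` to the `(u,v)` entry.  So
the off-diagonal `(u,v)` entry is `-∑ 1/len e` over the edges joining `u` and
`v`, and all row sums are zero. -/
noncomputable def lap (G : WMG) : Matrix G.V G.V ℝ :=
  ∑ e : G.E, (G.len e)⁻¹ •
    Matrix.of (fun u v : G.V =>
      (ind u (G.ends e).1 - ind u (G.ends e).2) *
      (ind v (G.ends e).1 - ind v (G.ends e).2))

/-- Effective resistance `r(p,q) = L⁺pp - 2·L⁺pq + L⁺qq`. -/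
noncomputable def res (G : WMG) (p q : G.V) : ℝ :=
  G.lap.mpinv p p - 2 * G.lap.mpinv p q + G.lap.mpinv q q

/-- Voltage function `j_p(q,s) = L⁺pp - L⁺pq - L⁺ps + L⁺qs`. -/
noncomputable def volt (G : WMG) (p q s : G.V) : ℝ :=
  G.lap.mpinv p p - G.lap.mpinv p q - G.lap.mpinv p s + G.lap.mpinv q s

/-- Two vertices are adjacent if some edge has them as its endpoints. -/
def Adj (G : WMG) (u v : G.V) : Prop :=
  ∃ e : G.E, G.ends e = (u, v) ∨ G.ends e = (v, u)

/-- `u` and `v` are joined by a walk in `G`. -/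
def Reach (G : WMG) (u v : G.V) : Prop := Relation.ReflTransGen G.Adj u v

/-- `G` is connected. -/
def Connected (G : WMG) : Prop := Nonempty G.V ∧ ∀ u v : G.V, G.Reach u v

/-- Quotient graph: identify vertices along (the equivalence generated by) the
relation `r`; all edges are kept. -/
noncomputable def quot (G : WMG) (r : G.V → G.V → Prop) : WMG where
  V := Quot r
  E := G.E
  instV := Fintype.ofFinite _
  instE := G.instE
  ends e := (Quot.mk r (G.ends e).1, Quot.mk r (G.ends e).2)
  len := G.len
  len_pos := G.len_pos

/-- The canonical map from the vertices of `G` to those of a quotient of `G`. -/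
def quotMap (G : WMG) (r : G.V → G.V → Prop) : G.V → (G.quot r).V := Quot.mk r

/-- `G_{pq}`: identify the vertices `p` and `q`. -/
noncomputable def ident2 (G : WMG) (p q : G.V) : WMG :=
  G.quot (fun x y => x = p ∧ y = q)

def ident2Map (G : WMG) (p q : G.V) : G.V → (G.ident2 p q).V :=
  G.quotMap _

/-- `G_{pqs}`: identify the vertices `p`, `q`, `s` into a single vertex. -/
noncomputable def ident3 (G : WMG) (p q s : G.V) : WMG :=
  G.quot (fun x y => (x = p ∧ y = q) ∨ (x = p ∧ y = s))

/-- `G_{pq,st}`: identify `p` with `q` and, separately, `s` with `t`. -/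
noncomputable def ident22 (G : WMG) (p q s t : G.V) : WMG :=
  G.quot (fun x y => (x = p ∧ y = q) ∨ (x = s ∧ y = t))

/-- `G_S`: identify all vertices in the set `S` into a single vertex. -/
noncomputable def identSet (G : WMG) (S : Set G.V) : WMG :=
  G.quot (fun x y => x ∈ S ∧ y ∈ S)

/-- `G − e`: delete the edge `e` (keeping all vertices). -/
noncomputable def delete (G : WMG) (e : G.E) : WMG where
  V := G.V
  E := {f : G.E // f ≠ e}
  instV := G.instV
  instE := Fintype.ofFinite _
  ends f := G.ends f.1
  len f := G.len f.1
  len_pos f := G.len_pos f.1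

/-- `e` is a bridge if `G − e` is disconnected. -/
def IsBridge (G : WMG) (e : G.E) : Prop := ¬ (G.delete e).Connected

/-- `Ḡ_e`: contract the edge `e` (identify its endpoints and delete it). -/
noncomputable def contract (G : WMG) (e : G.E) : WMG :=
  (G.delete e).quot (fun x y => x = (G.ends e).1 ∧ y = (G.ends e).2)

def contractMap (G : WMG) (e : G.E) : G.V → (G.contract e).V := Quot.mk _

/-- Replace the length of the edge `e` by `L'`. -/
noncomputable def setLen (G : WMG) (e : G.E) (L' : ℝ) (hL' : 0 < L') : WMG where
  V := G.V
  E := G.E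
  instV := G.instV
  instE := G.instE
  ends := G.ends
  len f := if f = e then L' else G.len f
  len_pos f := by
    by_cases hf : f = e
    · simpa [hf] using hL'
    · simpa [hf] using G.len_pos f

/-- `T` is (the edge set of) a spanning tree of `G`: using only edges of `T`
any two vertices are joined, and `T` has (number of vertices) − 1 edges. -/
def IsSpanningTree (G : WMG) (T : Finset G.E) : Prop :=
  (∀ u v : G.V, Relation.ReflTransGen
      (fun x y => ∃ e ∈ T, G.ends e = (x, y) ∨ G.ends e = (y, x)) u v) ∧
  T.card = Fintype.card G.V - 1

/-- `t G`: the number of spanning trees of `G` (equals `1` for a one-vertex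
graph; self-loops contribute nothing). -/
noncomputable def t (G : WMG) : ℕ := Nat.card {T : Finset G.E // G.IsSpanningTree T}

/-- `t(G_{pq})`, with the convention `t(G_{pp}) = 0`. -/
noncomputable def t2 (G : WMG) (p q : G.V) : ℕ :=
  if p = q then 0 else (G.ident2 p q).t

/-- Disjoint union of two graphs. -/
noncomputable def disjUnion (G₁ G₂ : WMG) : WMG where
  V := G₁.V ⊕ G₂.V
  E := G₁.E ⊕ G₂.E
  instV := inferInstance
  instE := inferInstance
  ends := Sum.elim (fun e => (Sum.inl (G₁.ends e).1, Sum.inl (G₁.ends e).2))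
                   (fun e => (Sum.inr (G₂.ends e).1, Sum.inr (G₂.ends e).2))
  len := Sum.elim G₁.len G₂.len
  len_pos := by
    rintro (e | e)
    · exact G₁.len_pos e
    · exact G₂.len_pos e

/-- Glue `G₁` and `G₂` along two pairs of vertices (`p₁ ↔ p₂`, `q₁ ↔ q₂`):
the result is the graph `G = G₁ ∪ G₂` with `G₁ ∩ G₂ = {p, q}` (the two pieces
share exactly these two vertices and no edges). -/
noncomputable def glue2 (G₁ G₂ : WMG) (p₁ q₁ : G₁.V) (p₂ q₂ : G₂.V) : WMG :=
  (G₁.disjUnion G₂).quot (fun x y =>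
    (x = Sum.inl p₁ ∧ y = Sum.inr p₂) ∨ (x = Sum.inl q₁ ∧ y = Sum.inr q₂))

/-- Glue `G₁` and `G₂` along three pairs of vertices: the result is the graph
`G = G₁ ∪ G₂` with `G₁ ∩ G₂ = {p, q, s}`. -/
noncomputable def glue3 (G₁ G₂ : WMG) (p₁ q₁ s₁ : G₁.V) (p₂ q₂ s₂ : G₂.V) : WMG :=
  (G₁.disjUnion G₂).quot (fun x y =>
    (x = Sum.inl p₁ ∧ y = Sum.inr p₂) ∨ (x = Sum.inl q₁ ∧ y = Sum.inr q₂) ∨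
    (x = Sum.inl s₁ ∧ y = Sum.inr s₂))

/-- Disjoint union of a finite family of graphs. -/
noncomputable def sigmaGraph {k : ℕ} (G : Fin k → WMG) : WMG where
  V := Σ i, (G i).V
  E := Σ i, (G i).E
  instV := inferInstance
  instE := inferInstance
  ends e := (⟨e.1, ((G e.1).ends e.2).1⟩, ⟨e.1, ((G e.1).ends e.2).2⟩)
  len e := (G e.1).len e.2
  len_pos e := (G e.1).len_pos e.2

/-- Glue the family `G i` along a common pair of vertices (all the `p i` are
identified together, and all the `q i` are identified together): the result is
`G = ⋃ G_i` with `G_i ∩ G_j = {p, q}` for all `i ≠ j`. -/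
noncomputable def glueFam {k : ℕ} (G : Fin k → WMG) (p q : ∀ i, (G i).V) : WMG :=
  (sigmaGraph G).quot (fun x y =>
    (∃ i j, x = ⟨i, p i⟩ ∧ y = ⟨j, p j⟩) ∨ (∃ i j, x = ⟨i, q i⟩ ∧ y = ⟨j, q j⟩))

/-- The cyclic successor on `Fin k`. -/
def finSucc {k : ℕ} (i : Fin k) : Fin k :=
  ⟨(i.1 + 1) % k, Nat.mod_lt _ (Nat.lt_of_le_of_lt (Nat.zero_le _) i.2)⟩

/-- `CG_k`: replace the `i`-th edge of the cycle `C_k` by the graph `G i`,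
identifying `t i` (of `G i`) with `s (i+1)` (of `G (i+1)`), cyclically. -/
noncomputable def cycleGlue {k : ℕ} (G : Fin k → WMG) (s t : ∀ i, (G i).V) : WMG :=
  (sigmaGraph G).quot (fun x y =>
    ∃ i, x = ⟨i, t i⟩ ∧ y = ⟨finSucc i, s (finSucc i)⟩)

/-- Join a new vertex `u` (the vertex `none`) to the vertex `p i` of `H` by
`a i` parallel unit edges, for each `i`.  The resulting graph `G` has `H = G − u`,
and if `p` is injective with all `a i ≥ 1` then `N_G(u) = {p 1, …, p n}` with
`a i` parallel edges joining `u` to `p i`. -/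
noncomputable def cone (H : WMG) {n : ℕ} (p : Fin n → H.V) (a : Fin n → ℕ) : WMG where
  V := Option H.V
  E := H.E ⊕ (Σ i : Fin n, Fin (a i))
  instV := inferInstance
  instE := inferInstance
  ends := Sum.elim (fun e => (some (H.ends e).1, some (H.ends e).2))
                   (fun e => (none, some (p e.1)))
  len := Sum.elim H.len (fun _ => 1)
  len_pos := by
    rintro (e | e)
    · exact H.len_pos e
    · exact one_pos

/-- The path graph `P_n` on `n` vertices `0, 1, …, n-1`, unit edge lengths. -/
noncomputable def path (n : ℕ) : WMG where
  V := Fin n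
  E := Fin (n - 1)
  instV := inferInstance
  instE := inferInstance
  ends i := (⟨i.1, by have := i.2; omega⟩, ⟨i.1 + 1, by have := i.2; omega⟩)
  len _ := 1
  len_pos _ := one_pos

/-- The cycle graph `C_n` on `n` vertices, unit edge lengths. -/
noncomputable def cycle (n : ℕ) : WMG where
  V := Fin n
  E := Fin n
  instV := inferInstance
  instE := inferInstance
  ends i := (i, finSucc i)
  len _ := 1
  len_pos _ := one_pos

/-- The modified fan graph `F̄an_n`: the path `P_n` together with one new hub
vertex joined to each path vertex by `a` parallel edges. -/
noncomputable def fanGraph (n a : ℕ) : WMG :=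
  (path n).cone (fun i : Fin n => i) (fun _ => a)

/-- The modified wheel graph `W̄_n`: the cycle `C_n` together with one new hub
vertex joined to each cycle vertex by `a` parallel edges. -/
noncomputable def wheelGraph (n a : ℕ) : WMG :=
  (cycle n).cone (fun i : Fin n => i) (fun _ => a)

end WMG

/-- The Morgan–Voyce polynomial `B_m(x) = ∑_{k=0}^m C(m+k+1, m−k) x^k`. -/
noncomputable def morganVoyce (m : ℕ) (x : ℝ) : ℝ :=
  ∑ k ∈ Finset.range (m + 1), (Nat.choose (m + k + 1) (m - k) : ℝ) * x ^ k

/-- The polynomial `W_m(x) = ∑_{k=0}^m ((2m+2)/(m+2+k)) C(m+2+k, m−k) x^k`. -/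
noncomputable def wheelPoly (m : ℕ) (x : ℝ) : ℝ :=
  ∑ k ∈ Finset.range (m + 1),
    ((2 * m + 2 : ℝ) / (m + 2 + k : ℝ)) * (Nat.choose (m + 2 + k) (m - k) : ℝ) * x ^ k

/-- The Lucas numbers: `L₀ = 2`, `L₁ = 1`, `L_{m+2} = L_m + L_{m+1}`
(so `L₂ = 3`). -/
def lucas : ℕ → ℕ
  | 0 => 2
  | 1 => 1
  | n + 2 => lucas n + lucas (n + 1)

/-!
Grounding the network at `p`, that is deleting the row and column of `p` from the Laplacian,
leaves a matrix whose determinant counts spanning trees and whose inverse is the voltage function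
`j_p`. Cramer's rule gives `j_p(q,q)` as a ratio of a principal minor to that determinant, and the
minor is the grounded Laplacian of `G_{pq}`; hence `t(G_{pq}) = t(G) j_p(q,q)`. Since `j_p(q,q)` is
the effective resistance between `p` and `q`, polarization expresses `j_p(q,s)` by the three
effective resistances. With edge lengths, every tree is weighted by its conductances.
-/

section DeterminantExpansions

open Matrix

variable {m n R : Type*} [Fintype m] [DecidableEq m] [CommRing R]

theorem det_submatrix_mul_submatrix_eq_sum_piFinset (A : Matrix m n R) (B : Matrix n m R)
    (S : Finset n) :
    (A.submatrix id ((↑) : S → n) * B.submatrix ((↑) : S → n) id).det =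
      ∑ r ∈ Fintype.piFinset fun _ : m => S, (∏ i, A i (r i)) * (B.submatrix r id).det := by
  have hrows : A.submatrix id ((↑) : S → n) * B.submatrix ((↑) : S → n) id =
      fun i => ∑ k ∈ S, A i k • B k := by
    ext i j
    simpa [mul_apply] using Finset.sum_coe_sort S fun k => A i k * B k j
  have hexpand := (detRowAlternating (R := R) (n := m)).toMultilinearMap.map_sum_finset
    (fun i k => A i k • B k) fun _ => S
  rw [hrows]
  refine hexpand.trans (Finset.sum_congr rfl fun r _ => ?_)
  exact (detRowAlternating (R := R) (n := m)).toMultilinearMap.map_smul_univ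
    (fun i => A i (r i)) fun i => B (r i)

theorem det_submatrix_id_eq_zero_of_not_injective (B : Matrix n m R) {r : m → n}
    (hr : ¬ Function.Injective r) : (B.submatrix r id).det = 0 := by
  obtain ⟨i, j, hij, hne⟩ := Function.not_injective_iff.1 hr
  exact det_zero_of_row_eq hne (congrArg B hij)

/-- The Cauchy–Binet formula. Multiplying the two submatrices inside the determinant avoids
choosing an ordering of each set `S`. -/
theorem det_mul_eq_sum_powersetCard [Fintype n] (A : Matrix m n R) (B : Matrix n m R) :
    (A * B).det = ∑ S ∈ Finset.powersetCard (Fintype.card m) (Finset.univ : Finset n),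
      (A.submatrix id ((↑) : S → n) * B.submatrix ((↑) : S → n) id).det := by
  have huniv : A * B = A.submatrix id (Subtype.val : ↥(Finset.univ : Finset n) → n) *
      B.submatrix (Subtype.val : ↥(Finset.univ : Finset n) → n) id := by
    ext i j
    exact (Finset.sum_coe_sort Finset.univ fun k => A i k * B k j).symm
  simp only [huniv, det_submatrix_mul_submatrix_eq_sum_piFinset, Fintype.piFinset_univ]
  rw [Finset.sum_comm' (t' := Finset.univ)
    (s' := fun r => {S ∈ Finset.powersetCard (Fintype.card m) Finset.univ | ∀ i, r i ∈ S})
    (by simp)]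
  refine Finset.sum_congr rfl fun r _ => ?_
  rw [Finset.sum_const]
  by_cases hr : Function.Injective r
  · have hcard : (Finset.univ.image r).card = Fintype.card m :=
      Finset.card_image_of_injective _ hr
    have honly : {S ∈ Finset.powersetCard (Fintype.card m) (Finset.univ : Finset n) |
        ∀ i, r i ∈ S} = {Finset.univ.image r} := by
      ext S
      simp only [Finset.mem_filter, Finset.mem_powersetCard_univ, Finset.mem_singleton]
      refine ⟨fun ⟨hS, hrS⟩ => ?_, ?_⟩
      · exact (Finset.eq_of_subset_of_card_le (Finset.image_subset_iff.2 fun i _ => hrS i)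
          (hS.trans hcard.symm).le).symm
      · rintro rfl
        exact ⟨hcard, fun i => Finset.mem_image_of_mem r (Finset.mem_univ i)⟩
    rw [honly, Finset.card_singleton, one_smul]
  · rw [det_submatrix_id_eq_zero_of_not_injective B hr, mul_zero, smul_zero]

theorem det_transpose_mul_diagonal_mul_eq_sum [Fintype n] [DecidableEq n] (A : Matrix n m R)
    (w : n → R) :
    (Aᵀ * diagonal w * A).det =
      ∑ S ∈ Finset.powersetCard (Fintype.card m) (Finset.univ : Finset n), (∏ k ∈ S, w k) *
        ((A.submatrix ((↑) : S → n) id)ᵀ * A.submatrix ((↑) : S → n) id).det := by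
  rw [det_mul_eq_sum_powersetCard]
  refine Finset.sum_congr rfl fun S hS => ?_
  let e : m ≃ S :=
    Fintype.equivOfCardEq (by simpa using (Finset.mem_powersetCard_univ.1 hS).symm)
  have hfactor : (Aᵀ * diagonal w).submatrix id ((↑) : S → n) =
      (A.submatrix ((↑) : S → n) id)ᵀ * diagonal fun k : S => w k := by
    ext i k
    simp
  have hprod : ∏ i, w (e i) = ∏ k ∈ S, w k :=
    (e.prod_comp fun k => w k).trans (Finset.prod_coe_sort S w)
  have hdiag : (diagonal fun k : S => w k).submatrix e e = diagonal fun i => w (e i) :=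
    submatrix_diagonal_equiv _ e
  set B := A.submatrix ((↑) : S → n) id
  rw [hfactor, ← submatrix_id_id (Bᵀ * _ * B), ← submatrix_id_id (Bᵀ * B),
    ← submatrix_mul_equiv _ B id e id, ← submatrix_mul_equiv _ B id e id,
    ← submatrix_mul_equiv _ (diagonal _) id e e, hdiag, det_mul, det_mul, det_mul, det_diagonal,
    hprod]
  ring

theorem det_transpose_mul_self_eq_one_of_span_eq_top [Fintype n] (A : Matrix n m ℤ)
    (hcard : Fintype.card n = Fintype.card m)
    (hspan : Submodule.span ℤ (Set.range A) = ⊤) : (Aᵀ * A).det = 1 := by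
  let e : m ≃ n := Fintype.equivOfCardEq hcard.symm
  set B := A.submatrix e id
  have hgram : Aᵀ * A = Bᵀ * B := (submatrix_mul_equiv Aᵀ A id e id).symm
  have hsurj : Function.Surjective fun v => v ᵥ* B := by
    have hrange : Set.range B.row = Set.range A := e.surjective.range_comp A
    rw [← coe_vecMulLinear, ← LinearMap.range_eq_top, range_vecMulLinear, hrange, hspan]
  have hunit : IsUnit B.det := (isUnit_iff_isUnit_det B).1 (vecMul_surjective_iff_isUnit.1 hsurj)
  rw [hgram, det_mul, det_transpose, Int.isUnit_mul_self hunit]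

theorem adjugate_apply_self (A : Matrix m m R) (i : m) :
    A.adjugate i i =
      (A.submatrix ((↑) : {j // j ≠ i} → m) ((↑) : {j // j ≠ i} → m)).det := by
  have htri := twoBlockTriangular_det (A.updateRow i (Pi.single i 1)) (· ≠ i)
    (by rintro j hj k hk; simp_all)
  have hminor : (A.updateRow i (Pi.single i 1)).toSquareBlockProp (· ≠ i) =
      A.submatrix (↑) (↑) := by
    ext j k
    simp [toSquareBlockProp, j.2]
  have : Unique {j // ¬ j ≠ i} := ⟨⟨⟨i, by simp⟩⟩, fun j => Subtype.ext (not_not.1 j.2)⟩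
  have hcorner : ((A.updateRow i (Pi.single i 1)).toSquareBlockProp fun j => ¬ j ≠ i).det = 1 := by
    rw [det_unique, toSquareBlockProp_def, of_apply, not_not.1 (default : {j // ¬ j ≠ i}).2]
    simp
  rw [adjugate_apply, htri, hminor, hcorner, mul_one]

theorem adjugate_eq_det_smul_of_mul_eq_one {A B : Matrix m m R} (h : A * B = 1) :
    A.adjugate = A.det • B := by
  calc A.adjugate = A.adjugate * (A * B) := by rw [h, Matrix.mul_one]
    _ = A.det • B := by rw [← Matrix.mul_assoc, adjugate_mul, smul_mul, Matrix.one_mul]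

end DeterminantExpansions

/-- `b` is a Moore–Penrose inverse of `a`, for elements of a multiplicative structure with an
involution; for real matrices the involution is the transpose. -/
structure IsPenroseInverse {M : Type*} [Mul M] [Star M] (a b : M) : Prop where
  mul_mul_self : a * b * a = a
  self_mul_mul : b * a * b = b
  isSelfAdjoint_mul : IsSelfAdjoint (a * b)
  isSelfAdjoint_mul' : IsSelfAdjoint (b * a)

namespace IsPenroseInverse

section StarMul

variable {M : Type*} [Semigroup M] [StarMul M] {a b c : M}

theorem unique (hb : IsPenroseInverse a b) (hc : IsPenroseInverse a c) : b = c := by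
  have hleft : b * a = c * a := by
    calc b * a = star (b * (a * c * a)) := by rw [hc.mul_mul_self, hb.isSelfAdjoint_mul'.star_eq]
      _ = star (c * a) * star (b * a) := by simp only [mul_assoc, ← star_mul]
      _ = c * (a * b * a) := by
        simp only [hb.isSelfAdjoint_mul'.star_eq, hc.isSelfAdjoint_mul'.star_eq, mul_assoc]
      _ = c * a := by rw [hb.mul_mul_self]
  have hright : a * b = a * c := by
    calc a * b = star (a * c * a * b) := by rw [hc.mul_mul_self, hb.isSelfAdjoint_mul.star_eq]
      _ = star (a * b) * star (a * c) := by simp only [mul_assoc, ← star_mul]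
      _ = a * b * a * c := by
        simp only [hb.isSelfAdjoint_mul.star_eq, hc.isSelfAdjoint_mul.star_eq, mul_assoc]
      _ = a * c := by rw [hb.mul_mul_self]
  calc b = b * a * b := hb.self_mul_mul.symm
    _ = c * a * c := by rw [hleft, mul_assoc, hright, mul_assoc]
    _ = c := hc.self_mul_mul

protected theorem star (h : IsPenroseInverse a b) : IsPenroseInverse (star a) (star b) where
  mul_mul_self := by rw [mul_assoc, ← star_mul, ← star_mul, h.mul_mul_self]
  self_mul_mul := by rw [mul_assoc, ← star_mul, ← star_mul, h.self_mul_mul]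
  isSelfAdjoint_mul := by
    rw [← star_mul, IsSelfAdjoint.star_iff]
    exact h.isSelfAdjoint_mul'
  isSelfAdjoint_mul' := by
    rw [← star_mul, IsSelfAdjoint.star_iff]
    exact h.isSelfAdjoint_mul

theorem isSelfAdjoint (ha : IsSelfAdjoint a) (h : IsPenroseInverse a b) : IsSelfAdjoint b := by
  have hstar := h.star
  rw [ha.star_eq] at hstar
  exact hstar.unique h

end StarMul

theorem mul_one_sub_mul {M : Type*} [Ring M] [StarRing M] {a b : M} (ha : IsSelfAdjoint a)
    (h : IsPenroseInverse a b) : a * (1 - a * b) = 0 := by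
  have hstar := congrArg star h.mul_mul_self
  rw [star_mul, h.isSelfAdjoint_mul.star_eq, ha.star_eq] at hstar
  rw [mul_sub, mul_one, hstar, sub_self]

theorem cfc_inv {A : Type*} [Ring A] [StarRing A] [TopologicalSpace A] [Algebra ℝ A]
    [ContinuousFunctionalCalculus ℝ A IsSelfAdjoint] {a : A} (ha : IsSelfAdjoint a)
    (hfin : (spectrum ℝ a).Finite) : IsPenroseInverse a (cfc (·⁻¹ : ℝ → ℝ) a) := by
  have hcont (f : ℝ → ℝ) : ContinuousOn f (spectrum ℝ a) := hfin.continuousOn f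
  set b := cfc (·⁻¹ : ℝ → ℝ) a
  have hab : a * b = cfc (fun x : ℝ => x * x⁻¹) a := by
    rw [cfc_mul _ _ a (hcont _) (hcont _), cfc_id' ℝ a]
  have hba : b * a = cfc (fun x : ℝ => x⁻¹ * x) a := by
    rw [cfc_mul _ _ a (hcont _) (hcont _), cfc_id' ℝ a]
  have hinv (x : ℝ) : x⁻¹ * x * x⁻¹ = x⁻¹ := by simpa using mul_inv_mul_cancel x⁻¹
  refine ⟨?_, ?_, hab ▸ cfc_predicate _ a, hba ▸ cfc_predicate _ a⟩
  · calc a * b * a = cfc (fun x : ℝ => x * x⁻¹ * x) a := by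
          rw [cfc_mul _ _ a (hcont _) (hcont _), cfc_id' ℝ a, hab]
      _ = a := by simp only [mul_inv_mul_cancel, cfc_id' ℝ a]
  · calc b * a * b = cfc (fun x : ℝ => x⁻¹ * x * x⁻¹) a := by
          rw [cfc_mul _ _ a (hcont _) (hcont _), hba]
      _ = b := by simp only [hinv, b]

end IsPenroseInverse

open Matrix in
theorem isPenroseInverse_mpinv {n : Type} [Fintype n] {A : Matrix n n ℝ} (hA : IsSelfAdjoint A) :
    IsPenroseInverse A A.mpinv := by
  have hexists : ∃ B : Matrix n n ℝ,
      A * B * A = A ∧ B * A * B = B ∧ (A * B)ᵀ = A * B ∧ (B * A)ᵀ = B * A :=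
    let ⟨h₁, h₂, h₃, h₄⟩ := IsPenroseInverse.cfc_inv hA finite_real_spectrum
    ⟨_, h₁, h₂, h₃, h₄⟩
  rw [mpinv, dif_pos hexists]
  obtain ⟨h₁, h₂, h₃, h₄⟩ := hexists.choose_spec
  exact ⟨h₁, h₂, h₃, h₄⟩

theorem sum_subtype_ne_eq_sum {α M : Type*} [Fintype α] [DecidableEq α] [AddCommMonoid M]
    (f : α → M) {a : α} (ha : f a = 0) : ∑ i : {i // i ≠ a}, f i = ∑ i, f i := by
  rw [Fintype.sum_eq_add_sum_subtype_ne f a, ha, zero_add]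

namespace WMG

open Matrix

/-- `u` and `v` are joined by a walk using only edges of `T`; the relation is spelled as in
`WMG.IsSpanningTree`. -/
def ReachIn (G : WMG) (T : Finset G.E) : G.V → G.V → Prop :=
  Relation.ReflTransGen fun x y => ∃ e ∈ T, G.ends e = (x, y) ∨ G.ends e = (y, x)

/-- The signed incidence matrix over `R`: the row of an edge with endpoints `a`, `b` is
`δ_a - δ_b`, which is `0` for a self-loop. -/
noncomputable def inc (R : Type*) [Ring R] (G : WMG) : Matrix G.E G.V R :=
  of fun e => Pi.single (G.ends e).1 1 - Pi.single (G.ends e).2 1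

/-- The signed incidence matrix with the column of `q` removed. -/
noncomputable def redInc (R : Type*) [Ring R] (G : WMG) (q : G.V) : Matrix G.E {v // v ≠ q} R :=
  (G.inc R).submatrix id (↑)

/-- The Laplacian with the row and column of `q` removed. -/
noncomputable def redLap (G : WMG) (q : G.V) : Matrix {v // v ≠ q} {v // v ≠ q} ℝ :=
  G.lap.submatrix (↑) (↑)

/-- The weighted number of spanning trees: a spanning tree counts with weight the product of
the conductances `1 / len e` of its edges. -/
noncomputable def treeSum (G : WMG) : ℝ :=
  ∑ T with G.IsSpanningTree T, ∏ e ∈ T, (G.len e)⁻¹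

/-- The weighted number of spanning trees of `G_{pq}`, with the convention that it is `0` when
`p = q`. -/
noncomputable def treeSum₂ (G : WMG) (p q : G.V) : ℝ :=
  if p = q then 0 else (G.ident2 p q).treeSum

variable {G : WMG}

section MatrixTree

variable {R : Type*} {T : Finset G.E} {q : G.V}

theorem ReachIn.symm {u v : G.V} (h : G.ReachIn T u v) : G.ReachIn T v u := by
  induction h with
  | refl => exact .refl
  | tail _ hstep ih => exact ih.head (hstep.imp fun _ => And.imp_right Or.symm)

theorem isSpanningTree_iff_forall_reachIn (q : G.V) :
    G.IsSpanningTree T ↔ (∀ v, G.ReachIn T q v) ∧ T.card = Fintype.card G.V - 1 :=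
  and_congr_left' ⟨fun h => h q, fun h u v => (h u).symm.trans (h v)⟩

theorem ReachIn.fst_iff_snd {u : G.V} {e : G.E} (he : e ∈ T) :
    G.ReachIn T u (G.ends e).1 ↔ G.ReachIn T u (G.ends e).2 :=
  ⟨fun h => h.tail ⟨e, he, Or.inl rfl⟩, fun h => h.tail ⟨e, he, Or.inr rfl⟩⟩

theorem inc_mulVec [Ring R] (x : G.V → R) (e : G.E) :
    (G.inc R *ᵥ x) e = x (G.ends e).1 - x (G.ends e).2 := by
  exact (sub_dotProduct _ _ x).trans (by simp only [single_one_dotProduct])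

theorem redInc_mulVec [Ring R] {x : G.V → R} (hx : x q = 0) :
    G.redInc R q *ᵥ (fun v => x v) = G.inc R *ᵥ x := by
  ext e
  exact sum_subtype_ne_eq_sum (fun v => G.inc R e v * x v) (by rw [hx, mul_zero])

theorem map_redInc_intCast (R : Type*) [Ring R] (G : WMG) (q : G.V) :
    (G.redInc ℤ q).map (Int.cast : ℤ → R) = G.redInc R q := by
  ext e v
  simp [redInc, inc, Pi.single_apply]

theorem ReachIn.indicator_mem_span_redInc {v : G.V} (h : G.ReachIn T q v) :
    (fun w : {w // w ≠ q} => (Pi.single v 1 : G.V → ℤ) w) ∈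
      Submodule.span ℤ (G.redInc ℤ q '' T) := by
  induction h with
  | refl =>
    convert Submodule.zero_mem _ using 1
    ext w
    exact Pi.single_eq_of_ne w.2 1
  | @tail a b _ hab ih =>
    obtain ⟨e, he, hends⟩ := hab
    have hrow := Submodule.subset_span (R := ℤ) (Set.mem_image_of_mem (G.redInc ℤ q) he)
    rcases hends with hends | hends
    · convert Submodule.sub_mem _ ih hrow using 1
      ext w
      simp [redInc, inc, hends]
    · convert Submodule.add_mem _ ih hrow using 1
      ext w
      simp [redInc, inc, hends]

theorem span_redInc_eq_top (h : ∀ v, G.ReachIn T q v) :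
    Submodule.span ℤ (G.redInc ℤ q '' T) = ⊤ := by
  rw [eq_top_iff, ← (Pi.basisFun ℤ {v // v ≠ q}).span_eq, Submodule.span_le]
  rintro _ ⟨v, rfl⟩
  have hv : (fun w : {w // w ≠ q} => (Pi.single v.1 1 : G.V → ℤ) w) =
      Pi.basisFun ℤ {v // v ≠ q} v := by
    ext w
    simp [Pi.single_apply, Subtype.ext_iff]
  exact hv ▸ (h v).indicator_mem_span_redInc

theorem exists_redInc_mulVec_eq_zero_of_not_reachIn {v : G.V} (hv : ¬ G.ReachIn T q v) :
    ∃ x : {v // v ≠ q} → ℤ, x ≠ 0 ∧ ∀ e ∈ T, (G.redInc ℤ q *ᵥ x) e = 0 := by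
  let χ : G.V → ℤ := fun w => if G.ReachIn T q w then 0 else 1
  have hχq : χ q = 0 := if_pos Relation.ReflTransGen.refl
  have hχv : χ v = 1 := if_neg hv
  have hvq : v ≠ q := by
    rintro rfl
    exact hv Relation.ReflTransGen.refl
  refine ⟨fun w => χ w, fun h => ?_, fun e he => ?_⟩
  · exact one_ne_zero (hχv.symm.trans (congrFun h ⟨v, hvq⟩))
  · rw [redInc_mulVec hχq, inc_mulVec]
    simp only [χ, ReachIn.fst_iff_snd he, sub_self]

theorem det_gram_redInc_int (hT : T.card = Fintype.card {v // v ≠ q}) :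
    (((G.redInc ℤ q).submatrix ((↑) : T → G.E) id)ᵀ *
      (G.redInc ℤ q).submatrix ((↑) : T → G.E) id).det =
        if G.IsSpanningTree T then 1 else 0 := by
  have hcard : T.card = Fintype.card G.V - 1 := by simpa using hT
  rw [isSpanningTree_iff_forall_reachIn q]
  simp only [hcard, and_true]
  split_ifs with hreach
  · refine det_transpose_mul_self_eq_one_of_span_eq_top _ (by simpa using hT) ?_
    exact (congrArg _ (Set.image_eq_range _ _).symm).trans (span_redInc_eq_top hreach)
  · push Not at hreach
    obtain ⟨v, hv⟩ := hreach
    obtain ⟨x, hx, hTx⟩ := exists_redInc_mulVec_eq_zero_of_not_reachIn hv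
    have hker : (G.redInc ℤ q).submatrix ((↑) : T → G.E) id *ᵥ x = 0 :=
      funext fun e => hTx e e.2
    refine exists_mulVec_eq_zero_iff.1 ⟨x, hx, ?_⟩
    rw [← mulVec_mulVec, hker, mulVec_zero]

theorem det_gram_redInc [CommRing R] (hT : T.card = Fintype.card {v // v ≠ q}) :
    (((G.redInc R q).submatrix ((↑) : T → G.E) id)ᵀ *
      (G.redInc R q).submatrix ((↑) : T → G.E) id).det =
        if G.IsSpanningTree T then 1 else 0 := by
  have hcast := congrArg (Int.castRingHom R) (det_gram_redInc_int hT)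
  rw [RingHom.map_det, RingHom.mapMatrix_apply, Matrix.map_mul, transpose_map,
    ← submatrix_map] at hcast
  simpa [map_redInc_intCast, apply_ite] using hcast

/-- The weighted matrix–tree theorem. -/
theorem det_transpose_redInc_mul_diagonal_mul_redInc [CommRing R] (q : G.V) (w : G.E → R) :
    ((G.redInc R q)ᵀ * diagonal w * G.redInc R q).det =
      ∑ T with G.IsSpanningTree T, ∏ e ∈ T, w e := by
  have hcard (T : Finset G.E) (hT : G.IsSpanningTree T) :
      T ∈ Finset.powersetCard (Fintype.card {v // v ≠ q}) Finset.univ := by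
    simp [hT.2]
  have hgram (T : Finset G.E) (hT : T ∈ Finset.powersetCard _ Finset.univ) :=
    det_gram_redInc (R := R) (q := q) (Finset.mem_powersetCard_univ.1 hT)
  rw [det_transpose_mul_diagonal_mul_eq_sum,
    Finset.sum_congr rfl fun T hT => congrArg ((∏ e ∈ T, w e) * ·) (hgram T hT)]
  simp only [mul_ite, mul_one, mul_zero, ← Finset.sum_filter]
  refine Finset.sum_congr (Finset.ext fun T => ?_) fun _ _ => rfl
  simp only [Finset.mem_filter, Finset.mem_univ, true_and, and_iff_right_iff_imp]
  exact hcard T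

end MatrixTree

section Laplacian

variable (G) in
theorem lap_eq_transpose_inc_mul :
    G.lap = (G.inc ℝ)ᵀ * diagonal (fun e => (G.len e)⁻¹) * G.inc ℝ := by
  ext u v
  rw [mul_apply]
  simp only [lap, inc, ind, Matrix.sum_apply, Matrix.smul_apply, mul_diagonal, of_apply,
    transpose_apply, Pi.sub_apply, Pi.single_apply, smul_eq_mul]
  exact Finset.sum_congr rfl fun e _ => by ring

variable (G) in
theorem isSelfAdjoint_lap : IsSelfAdjoint G.lap := by
  rw [lap_eq_transpose_inc_mul, isSelfAdjoint_iff, star_eq_conjTranspose,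
    conjTranspose_eq_transpose_of_trivial, transpose_mul, transpose_mul, transpose_transpose,
    diagonal_transpose, Matrix.mul_assoc]

variable (G) in
theorem treeSum_eq_det_redLap (q : G.V) : G.treeSum = (G.redLap q).det := by
  rw [treeSum, ← det_transpose_redInc_mul_diagonal_mul_redInc q, redLap,
    lap_eq_transpose_inc_mul]
  rfl

theorem dotProduct_lap_mulVec (x : G.V → ℝ) :
    x ⬝ᵥ G.lap *ᵥ x = ∑ e, (G.len e)⁻¹ * (x (G.ends e).1 - x (G.ends e).2) ^ 2 := by
  rw [lap_eq_transpose_inc_mul, ← mulVec_mulVec, ← mulVec_mulVec, dotProduct_mulVec,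
    vecMul_transpose]
  refine Finset.sum_congr rfl fun e _ => ?_
  rw [mulVec_diagonal, inc_mulVec]
  ring

theorem lap_mulVec_const (c : ℝ) : G.lap *ᵥ (fun _ => c) = 0 := by
  have hinc : G.inc ℝ *ᵥ (fun _ => c) = 0 := funext fun e => by simp [inc_mulVec]
  rw [lap_eq_transpose_inc_mul, ← mulVec_mulVec, hinc, mulVec_zero]

theorem Connected.eq_of_lap_mulVec_eq_zero (hG : G.Connected) {x : G.V → ℝ}
    (hx : G.lap *ᵥ x = 0) (u v : G.V) : x u = x v := by
  have henergy := dotProduct_lap_mulVec x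
  rw [hx, dotProduct_zero, eq_comm, Finset.sum_eq_zero_iff_of_nonneg fun e _ =>
    mul_nonneg (inv_nonneg.2 (G.len_pos e).le) (sq_nonneg _)] at henergy
  have hedge (e : G.E) : x (G.ends e).1 = x (G.ends e).2 := by
    simpa [(G.len_pos e).ne', sub_eq_zero] using henergy e (Finset.mem_univ e)
  induction hG.2 u v with
  | refl => rfl
  | tail _ hadj ih =>
    obtain ⟨e, he | he⟩ := hadj <;> have hx_e := hedge e <;> rw [he] at hx_e
    · exact ih.trans hx_e
    · exact ih.trans hx_e.symm

theorem mpinv_lap_comm (u v : G.V) : G.lap.mpinv u v = G.lap.mpinv v u := by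
  have h := (isPenroseInverse_mpinv G.isSelfAdjoint_lap).isSelfAdjoint G.isSelfAdjoint_lap
  exact (congrFun (congrFun h.star_eq u) v).symm

/-- `L L⁺` is the orthogonal projection along the constant functions, so it fixes
`δ_v - δ_w`. -/
theorem Connected.lap_mul_mpinv_sub (hG : G.Connected) (u v w : G.V) :
    (G.lap * G.lap.mpinv) u v - (G.lap * G.lap.mpinv) u w =
      (1 : Matrix G.V G.V ℝ) u v - (1 : Matrix G.V G.V ℝ) u w := by
  have hpinv := isPenroseInverse_mpinv G.isSelfAdjoint_lap
  set P := 1 - G.lap * G.lap.mpinv with hP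
  have hker : G.lap * P = 0 := hpinv.mul_one_sub_mul G.isSelfAdjoint_lap
  have hsymm : IsSelfAdjoint P := (IsSelfAdjoint.one _).sub hpinv.isSelfAdjoint_mul
  have hcol : P v u = P w u :=
    hG.eq_of_lap_mulVec_eq_zero (x := fun i => P i u)
      (funext fun i => congrFun (congrFun hker i) u) v w
  have hrow : P u v = P u w := by
    rw [← hsymm.star_eq, star_apply, star_apply, hcol]
  simp only [hP, Matrix.sub_apply] at hrow
  linarith

/-- The voltage function based at `p` is the Green function of the Laplacian grounded at `p`. -/
theorem Connected.redLap_mul_volt (hG : G.Connected) (p : G.V) :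
    G.redLap p * of (fun v w : {v // v ≠ p} => G.volt p v w) = 1 := by
  ext u w
  have hground : G.volt p p w = 0 := by
    rw [volt]
    ring
  have hvolt (v : G.V) : G.volt p v w = G.lap.mpinv v w - G.lap.mpinv v p -
      (G.lap.mpinv p w - G.lap.mpinv p p) := by
    rw [volt, mpinv_lap_comm p v]
    ring
  have hconst := congrFun (lap_mulVec_const (G := G) (G.lap.mpinv p w - G.lap.mpinv p p)) u
  calc ∑ v : {v // v ≠ p}, G.lap u v * G.volt p v w
      = ∑ v, G.lap u v * G.volt p v w :=
        sum_subtype_ne_eq_sum (fun v => G.lap u v * G.volt p v w) (by rw [hground, mul_zero])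
    _ = (G.lap * G.lap.mpinv) u w - (G.lap * G.lap.mpinv) u p -
          (G.lap *ᵥ fun _ => G.lap.mpinv p w - G.lap.mpinv p p) u := by
        simp only [hvolt, mul_apply, mulVec, dotProduct, mul_sub, Finset.sum_sub_distrib]
    _ = (1 : Matrix {v // v ≠ p} {v // v ≠ p} ℝ) u w := by
        rw [hconst, hG.lap_mul_mpinv_sub, one_apply_ne u.2]
        simp [one_apply, Subtype.ext_iff]

theorem Connected.treeSum_ne_zero (hG : G.Connected) : G.treeSum ≠ 0 := by
  obtain ⟨q⟩ := hG.1
  rw [G.treeSum_eq_det_redLap q]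
  exact det_ne_zero_of_right_inverse (hG.redLap_mul_volt q)

end Laplacian

section Identification

variable {p q : G.V}

theorem ident2Map_right : G.ident2Map p q q = G.ident2Map p q p :=
  (Quot.sound ⟨rfl, rfl⟩).symm

theorem ident2Map_eq_iff {u v : G.V} (hp : v ≠ p) (hq : v ≠ q) :
    G.ident2Map p q v = G.ident2Map p q u ↔ v = u := by
  let isV : (G.ident2 p q).V → Prop := Quot.lift (v = ·) <| by
    rintro _ _ ⟨rfl, rfl⟩
    exact propext (iff_of_false hp hq)
  exact ⟨fun h => (congrArg isV h).mp rfl, congrArg _⟩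

theorem lap_ident2 {u v : G.V} (hup : u ≠ p) (huq : u ≠ q) (hvp : v ≠ p) (hvq : v ≠ q) :
    (G.ident2 p q).lap (G.ident2Map p q u) (G.ident2Map p q v) = G.lap u v := by
  have hind {x : G.V} (hxp : x ≠ p) (hxq : x ≠ q) (y : G.V) :
      ind (G.ident2Map p q x) (G.ident2Map p q y) = ind x y :=
    if_congr (ident2Map_eq_iff hxp hxq) rfl rfl
  have hinc {x : G.V} (hxp : x ≠ p) (hxq : x ≠ q) (e : G.E) :
      ind (G.ident2Map p q x) ((G.ident2 p q).ends e).1 -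
          ind (G.ident2Map p q x) ((G.ident2 p q).ends e).2 =
        ind x (G.ends e).1 - ind x (G.ends e).2 :=
    congrArg₂ (· - ·) (hind hxp hxq _) (hind hxp hxq _)
  simp only [lap, Matrix.sum_apply, Matrix.smul_apply, of_apply]
  exact Finset.sum_congr rfl fun e _ =>
    congrArg₂ (fun a b => (G.len e)⁻¹ • (a * b)) (hinc hup huq e) (hinc hvp hvq e)

theorem treeSum_ident2_eq_det (hpq : q ≠ p) :
    (G.ident2 p q).treeSum = ((G.redLap p).submatrix
      ((↑) : {v : {v // v ≠ p} // v ≠ ⟨q, hpq⟩} → {v // v ≠ p}) (↑)).det := by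
  have hq (v : {v : {v // v ≠ p} // v ≠ ⟨q, hpq⟩}) : v.1.1 ≠ q := fun h => v.2 (Subtype.ext h)
  let f : {v : {v // v ≠ p} // v ≠ ⟨q, hpq⟩} →
      {w : (G.ident2 p q).V // w ≠ G.ident2Map p q p} := fun v =>
    ⟨G.ident2Map p q v.1, fun h => v.1.2 ((ident2Map_eq_iff v.1.2 (hq v)).1 h)⟩
  have hf : Function.Bijective f := by
    refine ⟨fun u v huv => ?_, ?_⟩
    · exact Subtype.ext (Subtype.ext
        ((ident2Map_eq_iff u.1.2 (hq u)).1 (congrArg Subtype.val huv)))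
    · rintro ⟨⟨w⟩, hw⟩
      have hwp : w ≠ p := fun h => hw (congrArg _ h)
      have hwq : w ≠ q := fun h => hw ((congrArg _ h).trans ident2Map_right)
      exact ⟨⟨⟨w, hwp⟩, fun h => hwq (congrArg Subtype.val h)⟩, rfl⟩
  rw [treeSum_eq_det_redLap _ (G.ident2Map p q p),
    ← det_submatrix_equiv_self (Equiv.ofBijective f hf)]
  congr 1
  ext u v
  exact lap_ident2 u.1.2 (hq u) v.1.2 (hq v)

theorem Connected.treeSum₂_eq_treeSum_mul_volt (hG : G.Connected) (p q : G.V) :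
    G.treeSum₂ p q = G.treeSum * G.volt p q q := by
  rw [treeSum₂]
  split_ifs with hpq
  · rw [hpq, volt]
    ring
  · have hqp : q ≠ p := Ne.symm hpq
    rw [treeSum_ident2_eq_det hqp, ← adjugate_apply_self,
      adjugate_eq_det_smul_of_mul_eq_one (hG.redLap_mul_volt p), ← treeSum_eq_det_redLap]
    rfl

theorem volt_eq_half_volt_self (p q s : G.V) :
    G.volt p q s = (G.volt p q q + G.volt p s s - G.volt q s s) / 2 := by
  simp only [volt]
  ring

end Identification

section UnitLength

theorem treeSum_eq_t (hlen : ∀ e, G.len e = 1) : G.treeSum = G.t := by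
  simp [treeSum, t, hlen, Nat.card_eq_fintype_card, Fintype.card_subtype]

theorem treeSum₂_eq_t2 (hlen : ∀ e, G.len e = 1) (p q : G.V) : G.treeSum₂ p q = G.t2 p q := by
  rw [treeSum₂, t2, Nat.cast_ite, Nat.cast_zero, treeSum_eq_t (G := G.ident2 p q) hlen]

end UnitLength

end WMG

theorem volt_eq_spanning_tree_ratio_general (G : WMG) (hG : G.Connected) (p q s : G.V) :
    G.volt p q s = (G.treeSum₂ p q + G.treeSum₂ p s - G.treeSum₂ q s) / (2 * G.treeSum) := by
  have htree := hG.treeSum_ne_zero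
  rw [WMG.volt_eq_half_volt_self, hG.treeSum₂_eq_treeSum_mul_volt,
    hG.treeSum₂_eq_treeSum_mul_volt, hG.treeSum₂_eq_treeSum_mul_volt]
  field_simp

/-- For a finite connected multigraph `G` with all edge lengths `1` and any
vertices `p, q, s`:
`j_p(q,s) = (t(G_{pq}) + t(G_{ps}) - t(G_{qs})) / (2 t(G))`
(with the convention `t(G_{xx}) = 0`). -/
theorem volt_eq_spanning_tree_ratio (G : WMG) (hG : G.Connected)
    (hlen : ∀ e, G.len e = 1) (p q s : G.V) :
    G.volt p q s = ((G.t2 p q : ℝ) + (G.t2 p s : ℝ) - (G.t2 q s : ℝ)) /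
      (2 * (G.t : ℝ)) := by
  rw [volt_eq_spanning_tree_ratio_general G hG, WMG.treeSum_eq_t hlen]
  simp only [WMG.treeSum₂_eq_t2 hlen]
end

section
/- Let G = G₁ ∪ G₂ be a connected multigraph which is the union of two subgraphs with G₁ ∩ G₂ = {p, q, s} for three vertices p, q, s. Writing a_i = t(G_{i,ps}), b_i = t(G_{i,pq}), c_i = t(G_{i,qs}) for i ∈ {1,2}, we have t(G) = t(G₁)·t(G_{2,pqs}) + t(G₂)·t(G_{1,pqs}) + (1/2)·[ a₁(−a₂+b₂+c₂) + b₁(a₂−b₂+c₂) + c₁(a₂+b₂−c₂) ]. In particular, if G₁ = G₂ glued along the same three vertices p, q, s, then t(G) = 4·t(G₁)·t(G_{1,pqs}). -/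
open scoped Classical

/-!
By the matrix-tree theorem, `t` is the determinant of the Laplacian with one terminal grounded.
Eliminating the vertices other than `p, q, s` by a Schur complement leaves a symmetric `2 × 2`
response matrix `R` and a factor `z = t(G_{pqs})`. Thus `t(G) = z * det R`, and merging two of the
terminals compresses `R` to a single entry, so that `t(G_{pq})`, `t(G_{ps})` and `t(G_{qs})`
determine `z * R`. Gluing along the terminals multiplies the factors and adds the responses,
`t(G) = z₁ * z₂ * det (R₁ + R₂)`, and polarizing the quadratic form `det` gives the claim.
-/

section CauchyBinet

variable {m E R : Type*} [Fintype m] [DecidableEq m] [Fintype E] [CommRing R]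

theorem det_mul_eq_sum_prod_mul_det (A : Matrix m E R) (B : Matrix E m R) :
    (A * B).det = ∑ g : m → E, (∏ i, A i (g i)) * (B.submatrix g id).det := by
  have hrows : (A * B : m → m → R) = fun i => ∑ e, A i e • B e := by
    ext i j
    simp [Matrix.mul_apply]
  calc (A * B).det
      = ∑ g : m → E, Matrix.detRowAlternating fun i => A i (g i) • B (g i) := by
        rw [hrows]
        exact Matrix.detRowAlternating.toMultilinearMap.map_sum _
    _ = _ := Finset.sum_congr rfl fun g _ => Matrix.detRowAlternating.map_smul_univ _ _

/-- The Cauchy–Binet formula, summed over ordered families of columns, which counts every set of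
columns `(card m)!` times. -/
theorem factorial_card_mul_det_mul (A : Matrix m E R) (B : Matrix E m R) :
    ((Fintype.card m).factorial : R) * (A * B).det =
      ∑ g : m → E, (A.submatrix id g).det * (B.submatrix g id).det := by
  have hperm (σ : Equiv.Perm m) : (A * B).det = ∑ g : m → E,
      (Equiv.Perm.sign σ : R) * (∏ i, A (σ i) (g i)) * (B.submatrix g id).det := by
    rw [det_mul_eq_sum_prod_mul_det]
    refine Fintype.sum_equiv (σ.symm.arrowCongr (Equiv.refl E)) _ _ fun g => ?_
    have hB : (B.submatrix (g ∘ σ) id).det = Equiv.Perm.sign σ * (B.submatrix g id).det :=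
      Matrix.det_permute σ (B.submatrix g id)
    have hA : ∏ i, A (σ i) ((g ∘ σ) i) = ∏ i, A i (g i) := Equiv.prod_comp σ fun i => A i (g i)
    have hsign : (Equiv.Perm.sign σ : R) * (Equiv.Perm.sign σ : R) = 1 := by
      rw [← Int.cast_mul, Int.units_coe_mul_self, Int.cast_one]
    change _ = _ * (∏ i, A (σ i) ((g ∘ σ) i)) * (B.submatrix (g ∘ σ) id).det
    rw [hA, hB]
    linear_combination (-(∏ i, A i (g i)) * (B.submatrix g id).det) * hsign
  calc ((Fintype.card m).factorial : R) * (A * B).det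
      = ∑ _σ : Equiv.Perm m, (A * B).det := by simp [Fintype.card_perm]
    _ = ∑ σ : Equiv.Perm m, ∑ g : m → E,
          (Equiv.Perm.sign σ : R) * (∏ i, A (σ i) (g i)) * (B.submatrix g id).det :=
        Finset.sum_congr rfl fun σ _ => hperm σ
    _ = _ := by
        rw [Finset.sum_comm]
        simp only [← Finset.sum_mul, Matrix.det_apply', Matrix.submatrix_apply, id]

end CauchyBinet

section Incidence

open scoped Matrix

variable {V E m n : Type*} [DecidableEq m] [DecidableEq n] (R : Type*) [CommRing R]

/-- The standard basis vector of a label, where `none` labels the grounded vertex. -/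
def labelVec (o : Option m) : m → R := fun w => if o = some w then 1 else 0

/-- The signed incidence matrix of the multigraph with edges `ends`, whose vertices are labelled by
`f`: vertices with equal labels are merged, and the row of the grounded label `none` is left out. -/
def incMatrix (ends : E → V × V) (f : V → Option m) : Matrix m E R :=
  Matrix.of fun w e => labelVec R (f (ends e).1) w - labelVec R (f (ends e).2) w

/-- Adjacency through one of the edges `ends`; for all edges of a `WMG` this is `WMG.Adj`. -/
def EdgeAdj (ends : E → V × V) (x y : V) : Prop := ∃ e, ends e = (x, y) ∨ ends e = (y, x)

/-- The matrix of the linear map that sends the basis vector of `w` to that of `h w`. -/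
def relabelMatrix (h : m → Option n) : Matrix n m R := Matrix.of fun w' w => labelVec R (h w) w'

theorem labelVec_none : labelVec R (none : Option m) = 0 := by
  ext w
  simp [labelVec]

theorem labelVec_some (w : m) : labelVec R (some w) = Pi.single w 1 := by
  ext w'
  simp [labelVec, Pi.single_apply, eq_comm]

theorem labelVec_bind [Fintype m] (h : m → Option n) (o : Option m) :
    labelVec R (o.bind h) = relabelMatrix R h *ᵥ labelVec R o := by
  cases o with
  | none => simp [labelVec_none]
  | some w =>
    ext w'
    simp [labelVec_some, relabelMatrix]

theorem relabelMatrix_mul_incMatrix [Fintype m] (ends : E → V × V) (f : V → Option m)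
    (h : m → Option n) :
    relabelMatrix R h * incMatrix R ends f = incMatrix R ends fun v => (f v).bind h := by
  ext w e
  simp [Matrix.mul_apply, incMatrix, labelVec_bind, Matrix.mulVec, dotProduct, mul_sub]

theorem vecMul_incMatrix [Fintype m] (ends : E → V × V) (f : V → Option m) (x : m → R) (e : E) :
    (x ᵥ* incMatrix R ends f) e = (f (ends e).1).elim 0 x - (f (ends e).2).elim 0 x := by
  have hlabel (o : Option m) : x ⬝ᵥ labelVec R o = o.elim 0 x := by
    cases o <;> simp [labelVec_none, labelVec_some]
  rw [← hlabel, ← hlabel, ← dotProduct_sub]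
  rfl

theorem map_castRingHom_incMatrix (ends : E → V × V) (f : V → Option m) :
    (incMatrix ℤ ends f).map (Int.castRingHom R) = incMatrix R ends f := by
  ext w e
  simp [incMatrix, labelVec]

variable {R}

/-- The labels reached from the grounded vertex lie in the column span: telescope along a path. -/
theorem exists_mulVec_eq_labelVec [Fintype E] {ends : E → V × V} {f : V → Option m} {r v : V}
    (hr : f r = none) (hv : Relation.ReflTransGen (EdgeAdj ends) r v) :
    ∃ y, incMatrix R ends f *ᵥ y = labelVec R (f v) := by
  induction hv with
  | refl => exact ⟨0, by rw [hr, labelVec_none, Matrix.mulVec_zero]⟩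
  | @tail b c _ hbc ih =>
    obtain ⟨y, hy⟩ := ih
    obtain ⟨e, he⟩ := hbc
    have hcol : incMatrix R ends f *ᵥ Pi.single e 1 =
        labelVec R (f (ends e).1) - labelVec R (f (ends e).2) := by
      ext w
      simp [incMatrix]
    rcases he with he | he
    · refine ⟨y - Pi.single e 1, ?_⟩
      rw [Matrix.mulVec_sub, hy, hcol, he, sub_sub_cancel]
    · refine ⟨y + Pi.single e 1, ?_⟩
      rw [Matrix.mulVec_add, hy, hcol, he, add_sub_cancel]

theorem isUnit_det_incMatrix [Fintype m] {ends : m → V × V} {f : V → Option m}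
    (hf : f.Surjective) (hconn : ∀ u v, Relation.ReflTransGen (EdgeAdj ends) u v) :
    IsUnit (incMatrix R ends f).det := by
  obtain ⟨r, hr⟩ := hf none
  choose v hv using fun w => hf (some w)
  choose y hy using fun w => exists_mulVec_eq_labelVec (R := R) hr (hconn r (v w))
  have hmul : incMatrix R ends f * (Matrix.of y).transpose = 1 := by
    ext w w'
    simp only [Matrix.one_apply, ← Pi.single_apply, ← labelVec_some, ← hv, ← hy]
    rfl
  exact Matrix.isUnit_det_of_right_inverse hmul

/-- The indicator of the vertices not joined to the grounded one is in the left kernel. -/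
theorem det_incMatrix_eq_zero [Fintype m] [IsDomain R] {ends : m → V × V} {f : V → Option m}
    (hf : f.Bijective) (hconn : ¬ ∀ u v, Relation.ReflTransGen (EdgeAdj ends) u v) :
    (incMatrix R ends f).det = 0 := by
  have : Std.Symm (EdgeAdj ends) := ⟨fun _ _ ⟨e, he⟩ => ⟨e, he.symm⟩⟩
  let Joined := Relation.ReflTransGen (EdgeAdj ends)
  obtain ⟨r, hr⟩ := hf.surjective none
  obtain ⟨a, ha⟩ : ∃ a, ¬ Joined r a := by
    by_contra! hall
    exact hconn fun u v => (Std.Symm.symm _ _ (hall u)).trans (hall v)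
  let ψ := Equiv.ofBijective f hf
  let x : m → R := fun w => if Joined r (ψ.symm (some w)) then 0 else 1
  have hx (v : V) : (f v).elim 0 x = if Joined r v then 0 else 1 := by
    cases hv : f v with
    | none => simp [hf.injective (hv.trans hr.symm), Joined, Relation.ReflTransGen.refl]
    | some w => simp [x, show ψ.symm (some w) = v from ψ.symm_apply_eq.mpr hv.symm]
  refine Matrix.exists_vecMul_eq_zero_iff.mp ⟨x, fun hzero => ?_, funext fun e => ?_⟩
  · have := hx a
    rw [if_neg ha, hzero] at this
    cases hfa : f a <;> simp [hfa] at this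
  · have hedge : Joined r (ends e).1 ↔ Joined r (ends e).2 :=
      ⟨fun h => h.tail ⟨e, Or.inl rfl⟩, fun h => h.tail ⟨e, Or.inr rfl⟩⟩
    simp only [vecMul_incMatrix, hx, hedge, sub_self, Pi.zero_apply]

end Incidence

theorem card_filter_univ_image_eq {m α : Type*} [Fintype m] [DecidableEq m] [Fintype α]
    [DecidableEq α] {T : Finset α} (hT : T.card = Fintype.card m) :
    Finset.card {g : m → α | Finset.univ.image g = T} = (Fintype.card m).factorial := by
  have e₀ : m ≃ T := Fintype.equivOfCardEq (by rw [Fintype.card_coe, hT])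
  rw [← Fintype.card_equiv e₀, ← Finset.card_univ]
  symm
  refine Finset.card_nbij (fun e i => (e i : α)) (fun e _ => ?_)
    (fun e _ e' _ h => Equiv.ext fun i => Subtype.ext (congrFun h i)) fun g hg => ?_
  · simp only [Finset.coe_filter, Finset.mem_univ, true_and, Set.mem_ofPred_eq]
    ext a
    simp only [Finset.mem_image, Finset.mem_univ, true_and]
    exact ⟨fun ⟨i, hi⟩ => hi ▸ (e i).2, fun ha => ⟨e.symm ⟨a, ha⟩, by simp⟩⟩
  · obtain rfl : Finset.univ.image g = T := by simpa using hg
    have hinj : g.Injective := by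
      rwa [← Finset.card_univ, Finset.card_image_iff, Finset.coe_univ, Set.injOn_univ] at hT
    refine ⟨Equiv.ofBijective (fun i => ⟨g i, by simp⟩) ⟨fun i j hij => ?_, ?_⟩, by simp, rfl⟩
    · exact hinj (congrArg Subtype.val hij)
    · rintro ⟨a, ha⟩
      obtain ⟨i, -, rfl⟩ := Finset.mem_image.mp ha
      exact ⟨i, rfl⟩

namespace WMG

section MatrixTree

open scoped Matrix

variable (G : WMG) {m : Type*} [Fintype m] {φ : G.V → Option m}

theorem isSpanningTree_image_iff (hφ : φ.Bijective) (g : m → G.E) :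
    G.IsSpanningTree (Finset.univ.image g) ↔
      (∀ u v, Relation.ReflTransGen (EdgeAdj (G.ends ∘ g)) u v) ∧ g.Injective := by
  have hcard : Fintype.card G.V - 1 = Fintype.card m := by
    rw [Fintype.card_of_bijective hφ, Fintype.card_option, Nat.add_sub_cancel]
  have hadj : (fun x y => ∃ e ∈ Finset.univ.image g, G.ends e = (x, y) ∨ G.ends e = (y, x)) =
      EdgeAdj (G.ends ∘ g) := by
    ext x y
    simp [EdgeAdj]
  rw [IsSpanningTree, hadj, hcard, ← Finset.card_univ, Finset.card_image_iff, Finset.coe_univ,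
    Set.injOn_univ]

variable [DecidableEq m]

theorem sq_det_incMatrix (hφ : φ.Bijective) (g : m → G.E) :
    (incMatrix ℤ (G.ends ∘ g) φ).det ^ 2 =
      if G.IsSpanningTree (Finset.univ.image g) then 1 else 0 := by
  rw [isSpanningTree_image_iff G hφ]
  split_ifs with h
  · exact Int.isUnit_sq (isUnit_det_incMatrix hφ.surjective h.1)
  · rw [sq_eq_zero_iff]
    rcases not_and_or.mp h with hconn | hinj
    · exact det_incMatrix_eq_zero hφ hconn
    · obtain ⟨i, j, hij, hne⟩ := Function.not_injective_iff.mp hinj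
      exact Matrix.det_zero_of_column_eq hne fun w => by simp [incMatrix, hij]

theorem card_isSpanningTree_image (hφ : φ.Bijective) :
    Finset.card {g : m → G.E | G.IsSpanningTree (Finset.univ.image g)} =
      (Fintype.card m).factorial * G.t := by
  have hfiber (T : Finset G.E) (hT : T ∈ Finset.univ.filter G.IsSpanningTree) :
      Finset.card {g ∈ {g : m → G.E | G.IsSpanningTree (Finset.univ.image g)} |
        Finset.univ.image g = T} = (Fintype.card m).factorial := by
    have hT : G.IsSpanningTree T := by simpa using hT
    rw [← card_filter_univ_image_eq (T := T), Finset.filter_filter]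
    · congr 1
      ext g
      simpa using fun h => h ▸ hT
    · rw [hT.2, Fintype.card_of_bijective hφ, Fintype.card_option, Nat.add_sub_cancel]
  rw [Finset.card_eq_sum_card_fiberwise (f := fun g => Finset.univ.image g)
    (t := Finset.univ.filter G.IsSpanningTree) (fun g hg => by simpa using hg),
    Finset.sum_congr rfl hfiber, Finset.sum_const, smul_eq_mul, mul_comm, t,
    Nat.card_eq_fintype_card, Fintype.card_subtype]

/-- The Laplacian of `G` with unit edge weights, after merging vertices with equal labels and
deleting the row and column of the grounded label `none`. -/
def groundedLap (R : Type*) [CommRing R] (f : G.V → Option m) : Matrix m m R :=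
  incMatrix R G.ends f * (incMatrix R G.ends f)ᵀ

variable {R : Type*} [CommRing R]

theorem t_eq_det_groundedLap (hφ : φ.Bijective) : (G.t : R) = (G.groundedLap R φ).det := by
  have hint : (G.t : ℤ) = (G.groundedLap ℤ φ).det := by
    refine mul_left_cancel₀ (Nat.cast_ne_zero.mpr (Fintype.card m).factorial_ne_zero) ?_
    rw [groundedLap, factorial_card_mul_det_mul, ← Nat.cast_mul, ← card_isSpanningTree_image G hφ,
      Finset.card_filter, Nat.cast_sum]
    refine Finset.sum_congr rfl fun g _ => ?_
    rw [Nat.cast_ite, Nat.cast_one, Nat.cast_zero, ← sq_det_incMatrix G hφ g, sq,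
      ← Matrix.transpose_submatrix, Matrix.det_transpose]
    rfl
  rw [← Int.cast_natCast, hint, groundedLap, groundedLap, ← map_castRingHom_incMatrix R,
    ← Matrix.transpose_map, ← Matrix.map_mul, ← RingHom.mapMatrix_apply, ← RingHom.map_det]
  rfl

theorem t_quot_eq_det_groundedLap {r : G.V → G.V → Prop} {f : G.V → Option m} (hf : f.Surjective)
    (hr : ∀ x y, r x y → f x = f y) (hinj : ∀ x y, f x = f y → Quot.mk r x = Quot.mk r y) :
    ((G.quot r).t : R) = (G.groundedLap R f).det := by
  refine t_eq_det_groundedLap (G.quot r) (φ := Quot.lift f hr)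
    ⟨?_, (Quot.surjective_lift hr).mpr hf⟩
  rintro ⟨x⟩ ⟨y⟩ h
  exact hinj x y h

end MatrixTree

section GroundedLap

open scoped Matrix

variable (G : WMG) {m n : Type*} [DecidableEq m] [DecidableEq n]

theorem posSemidef_groundedLap [Finite m] (f : G.V → Option m) :
    (G.groundedLap ℝ f).PosSemidef := by
  simpa [groundedLap] using Matrix.posSemidef_self_mul_conjTranspose (incMatrix ℝ G.ends f)

variable {R : Type*} [CommRing R]

theorem isSymm_groundedLap (f : G.V → Option m) : (G.groundedLap R f).IsSymm := by
  rw [groundedLap, Matrix.IsSymm, Matrix.transpose_mul, Matrix.transpose_transpose]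

theorem groundedLap_bind [Fintype m] (f : G.V → Option m) (h : m → Option n) :
    G.groundedLap R (fun v => (f v).bind h) =
      relabelMatrix R h * G.groundedLap R f * (relabelMatrix R h)ᵀ := by
  simp only [groundedLap, ← relabelMatrix_mul_incMatrix, Matrix.transpose_mul, Matrix.mul_assoc]

theorem relabelMatrix_some_inl_mul_mul_transpose [Fintype m] (X : Matrix m m R) :
    relabelMatrix R (fun a => some (Sum.inl a : m ⊕ n)) * X *
        (relabelMatrix R fun a => some (Sum.inl a : m ⊕ n))ᵀ =
      Matrix.fromBlocks X 0 0 0 := by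
  ext (a | w) (b | w') <;> simp [relabelMatrix, labelVec, Matrix.mul_apply]

theorem groundedLap_map_inl (f : G.V → Option m) :
    G.groundedLap R (fun v => (f v).map (Sum.inl : m → m ⊕ n)) =
      Matrix.fromBlocks (G.groundedLap R f) 0 0 0 := by
  have hinl (o : Option m) :
      labelVec R (o.map (Sum.inl : m → m ⊕ n)) = Sum.elim (labelVec R o) 0 := by
    ext (a | w) <;> cases o <;> simp [labelVec]
  ext (a | w) (b | w') <;> simp [groundedLap, incMatrix, Matrix.mul_apply, hinl]

theorem groundedLap_disjUnion (G₁ G₂ : WMG) (f₁ : G₁.V → Option m) (f₂ : G₂.V → Option m) :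
    (G₁.disjUnion G₂).groundedLap R (Sum.elim f₁ f₂) =
      G₁.groundedLap R f₁ + G₂.groundedLap R f₂ := by
  ext u v
  simp only [groundedLap, Matrix.add_apply, Matrix.mul_apply, Matrix.transpose_apply]
  exact Fintype.sum_sum_type _

end GroundedLap

end WMG

section SchurComplement

open scoped Matrix

variable {k k' n R : Type*} [Fintype n] [DecidableEq n] [CommRing R]

/-- The Schur complement of the lower right block of a block matrix, which is eliminated. It is only
meaningful when that block is invertible, the inverse being `0` otherwise. -/
noncomputable def schurCompl (M : Matrix (k ⊕ n) (k ⊕ n) R) : Matrix k k R :=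
  M.toBlocks₁₁ - M.toBlocks₁₂ * M.toBlocks₂₂⁻¹ * M.toBlocks₂₁

theorem isSymm_schurCompl {M : Matrix (k ⊕ n) (k ⊕ n) R} (hM : M.IsSymm) :
    (schurCompl M).IsSymm := by
  have h₁₁ : M.toBlocks₁₁ᵀ = M.toBlocks₁₁ := congrArg Matrix.toBlocks₁₁ hM
  have h₁₂ : M.toBlocks₁₂ᵀ = M.toBlocks₂₁ := congrArg Matrix.toBlocks₂₁ hM
  have h₂₁ : M.toBlocks₂₁ᵀ = M.toBlocks₁₂ := congrArg Matrix.toBlocks₁₂ hM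
  have h₂₂ : M.toBlocks₂₂ᵀ = M.toBlocks₂₂ := congrArg Matrix.toBlocks₂₂ hM
  simp only [Matrix.IsSymm, schurCompl, Matrix.transpose_sub, Matrix.transpose_mul,
    Matrix.transpose_nonsing_inv, h₁₁, h₁₂, h₂₁, h₂₂, Matrix.mul_assoc]

variable [Fintype k]

theorem fromBlocks_mul_mul_transpose (P : Matrix k' k R) (M : Matrix (k ⊕ n) (k ⊕ n) R) :
    Matrix.fromBlocks P 0 0 (1 : Matrix n n R) * M *
        (Matrix.fromBlocks P 0 0 (1 : Matrix n n R))ᵀ =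
      Matrix.fromBlocks (P * M.toBlocks₁₁ * Pᵀ) (P * M.toBlocks₁₂) (M.toBlocks₂₁ * Pᵀ)
        M.toBlocks₂₂ := by
  conv_lhs => rw [← Matrix.fromBlocks_toBlocks M]
  rw [Matrix.fromBlocks_transpose, Matrix.fromBlocks_multiply, Matrix.fromBlocks_multiply]
  simp

theorem schurCompl_fromBlocks_mul_mul_transpose (P : Matrix k' k R)
    (M : Matrix (k ⊕ n) (k ⊕ n) R) :
    schurCompl (Matrix.fromBlocks P 0 0 (1 : Matrix n n R) * M *
        (Matrix.fromBlocks P 0 0 (1 : Matrix n n R))ᵀ) =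
      P * schurCompl M * Pᵀ := by
  rw [fromBlocks_mul_mul_transpose]
  simp [schurCompl, Matrix.mul_sub, Matrix.sub_mul, Matrix.mul_assoc]

variable [DecidableEq k]

/-- If the eliminated block is singular, then by positivity its kernel lies in that of the whole
matrix, so both sides vanish. -/
theorem det_add_fromBlocks_eq_mul_det_schurCompl {M : Matrix (k ⊕ n) (k ⊕ n) ℝ}
    (hM : M.PosSemidef) (X : Matrix k k ℝ) :
    (M + Matrix.fromBlocks X 0 0 0).det = M.toBlocks₂₂.det * (schurCompl M + X).det := by
  by_cases hdet : M.toBlocks₂₂.det = 0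
  · obtain ⟨x, hx0, hx⟩ := Matrix.exists_mulVec_eq_zero_iff.mpr hdet
    have hform : star (Sum.elim 0 x) ⬝ᵥ M *ᵥ Sum.elim 0 x = 0 := by
      rw [← Matrix.fromBlocks_toBlocks M, Matrix.fromBlocks_mulVec]
      simp [dotProduct, hx]
    have hker : M *ᵥ Sum.elim 0 x = 0 := (hM.dotProduct_mulVec_zero_iff _).mp hform
    rw [hdet, zero_mul, ← Matrix.exists_mulVec_eq_zero_iff]
    refine ⟨Sum.elim 0 x, fun h => hx0 (funext fun i => congrFun h (Sum.inr i)), ?_⟩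
    rw [Matrix.add_mulVec, hker, Matrix.fromBlocks_mulVec]
    simp
  · have := M.toBlocks₂₂.invertibleOfIsUnitDet (isUnit_iff_ne_zero.mpr hdet)
    conv_lhs => rw [← Matrix.fromBlocks_toBlocks M]
    rw [Matrix.fromBlocks_add, add_zero, add_zero, add_zero, Matrix.det_fromBlocks₂₂,
      Matrix.invOf_eq_nonsing_inv, schurCompl, sub_add_eq_add_sub]

end SchurComplement

section ExtendRelabel

variable {k k' W W' : Type*}

/-- The relabelling of terminals `k` and interior vertices `W` that acts on the terminals as `h`,
where `none` grounds a terminal, and keeps the interior labels. -/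
def extendRelabel (h : k → Option k') : k ⊕ W → Option (k' ⊕ W) :=
  Sum.elim (fun a => (h a).map Sum.inl) (some ∘ Sum.inr)

theorem map_inl_bind_extendRelabel (h : k → Option k') (a : Option k) :
    (a.map Sum.inl).bind (extendRelabel (W := W) h) = (a.bind h).map Sum.inl := by
  cases a <;> rfl

theorem bind_extendRelabel_eq_some_inr {h : k → Option k'} {o : Option (k ⊕ W)} {w : W} :
    o.bind (extendRelabel h) = some (Sum.inr w) ↔ o = some (Sum.inr w) := by
  rcases o with _ | a | w' <;> simp [extendRelabel]

theorem bind_extendRelabel_some_inl_injective :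
    Function.Injective fun o : Option (k ⊕ W) =>
      o.bind (extendRelabel fun a => some (Sum.inl a : k ⊕ W')) := by
  rintro (_ | a | w) (_ | b | w') h <;> simp_all [extendRelabel]

theorem bind_extendRelabel_some_inl_eq_map_inl {o₁ : Option (k ⊕ W)} {o₂ : Option (k ⊕ W')} :
    o₁.bind (extendRelabel fun a => some (Sum.inl a)) = o₂.map Sum.inl ↔
      ∃ a : Option k, o₁ = a.map Sum.inl ∧ o₂ = a.map Sum.inl := by
  rcases o₁ with _ | a | w <;> rcases o₂ with _ | b | w' <;> simp [extendRelabel, eq_comm]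

theorem relabelMatrix_extendRelabel {R : Type*} [CommRing R] [DecidableEq k'] [DecidableEq W]
    (h : k → Option k') :
    relabelMatrix R (extendRelabel (W := W) h) = Matrix.fromBlocks (relabelMatrix R h) 0 0 1 := by
  ext (b | w) (a | w') <;>
    simp [relabelMatrix, extendRelabel, labelVec, Matrix.one_apply, eq_comm]

end ExtendRelabel

namespace WMG

section Response

open scoped Matrix

variable {G : WMG} {k k' W : Type*}

/-- The vertex with terminal label `a`, where the labelling `φ` distinguishes a grounded terminal
`none`, further terminals indexed by `k`, and interior vertices indexed by `W`. -/
def terminal (φ : G.V ≃ Option (k ⊕ W)) (a : Option k) : G.V := φ.symm (a.map Sum.inl)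

theorem exists_terminal_eq {τ : Option k → G.V} (hτ : τ.Injective) :
    ∃ φ : G.V ≃ Option (k ⊕ {v // v ∉ Set.range τ}), terminal φ = τ := by
  let vertex : Option (k ⊕ {v // v ∉ Set.range τ}) → G.V
    | none => τ none
    | some (Sum.inl a) => τ (some a)
    | some (Sum.inr v) => v
  have hvertex : vertex.Bijective := by
    constructor
    · rintro (_ | a | v) (_ | b | w) h
      case none.none => rfl
      case some.inr.some.inr => exact congrArg (some ∘ Sum.inr) (Subtype.ext h)
      case none.some.inr => exact absurd ⟨none, h⟩ w.2
      case some.inl.some.inr => exact absurd ⟨some a, h⟩ w.2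
      case some.inr.none => exact absurd ⟨none, h.symm⟩ v.2
      case some.inr.some.inl => exact absurd ⟨some b, h.symm⟩ v.2
      all_goals simpa using hτ h
    · intro v
      by_cases hv : v ∈ Set.range τ
      · obtain ⟨_ | a, rfl⟩ := hv
        exacts [⟨none, rfl⟩, ⟨some (Sum.inl a), rfl⟩]
      · exact ⟨some (Sum.inr ⟨v, hv⟩), rfl⟩
  exact ⟨(Equiv.ofBijective vertex hvertex).symm, funext fun a => by cases a <;> rfl⟩

variable [DecidableEq k] [DecidableEq k'] [Fintype k'] [DecidableEq W] [Fintype W]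

/-- The determinant of the Laplacian on the interior vertices, which counts the spanning trees after
all terminals have been merged. -/
noncomputable def interiorDet (φ : G.V ≃ Option (k ⊕ W)) : ℝ :=
  (G.groundedLap ℝ φ).toBlocks₂₂.det

/-- The response matrix of a network: the grounded Laplacian with the interior vertices
eliminated. -/
noncomputable def response (φ : G.V ≃ Option (k ⊕ W)) : Matrix k k ℝ :=
  schurCompl (G.groundedLap ℝ φ)

theorem isSymm_response (φ : G.V ≃ Option (k ⊕ W)) : (response φ).IsSymm :=
  isSymm_schurCompl (isSymm_groundedLap G φ)

variable [Fintype k]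

theorem det_groundedLap_extendRelabel_add (φ : G.V ≃ Option (k ⊕ W)) (h : k → Option k')
    (X : Matrix k' k' ℝ) :
    (G.groundedLap ℝ (fun v => (φ v).bind (extendRelabel h)) + Matrix.fromBlocks X 0 0 0).det =
      interiorDet φ * (relabelMatrix ℝ h * response φ * (relabelMatrix ℝ h)ᵀ + X).det := by
  rw [det_add_fromBlocks_eq_mul_det_schurCompl (posSemidef_groundedLap G _), groundedLap_bind,
    relabelMatrix_extendRelabel, schurCompl_fromBlocks_mul_mul_transpose,
    fromBlocks_mul_mul_transpose, Matrix.toBlocks_fromBlocks₂₂]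
  rfl

theorem t_quot_eq_interiorDet_mul_det (φ : G.V ≃ Option (k ⊕ W)) {r : G.V → G.V → Prop}
    {h : k → Option k'} (hsurj : ∀ b, ∃ a, h a = some b)
    (hr : ∀ x y, r x y → (φ x).bind (extendRelabel h) = (φ y).bind (extendRelabel h))
    (hmerge : ∀ a b : Option k, a.bind h = b.bind h →
      Quot.mk r (terminal φ a) = Quot.mk r (terminal φ b)) :
    ((G.quot r).t : ℝ) =
      interiorDet φ * (relabelMatrix ℝ h * response φ * (relabelMatrix ℝ h)ᵀ).det := by
  have hlabel (v : G.V) : (∃ w, φ v = some (Sum.inr w)) ∨ ∃ a, v = terminal φ a := by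
    rcases hv : φ v with _ | a | w
    · exact Or.inr ⟨none, φ.injective (by simp [hv, terminal])⟩
    · exact Or.inr ⟨some a, φ.injective (by simp [hv, terminal])⟩
    · exact Or.inl ⟨w, rfl⟩
  rw [← add_zero (relabelMatrix ℝ h * _ * _), ← det_groundedLap_extendRelabel_add,
    Matrix.fromBlocks_zero, add_zero]
  refine t_quot_eq_det_groundedLap G ?_ hr fun x y hxy => ?_
  · rintro (_ | b | w)
    · exact ⟨φ.symm none, by simp⟩
    · obtain ⟨a, ha⟩ := hsurj b
      exact ⟨φ.symm (some (Sum.inl a)), by simp [extendRelabel, ha]⟩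
    · exact ⟨φ.symm (some (Sum.inr w)), by simp [extendRelabel]⟩
  · rcases hlabel x with ⟨w, hx⟩ | ⟨a, rfl⟩
    · have hy := hxy.symm.trans (bind_extendRelabel_eq_some_inr.mpr hx)
      rw [φ.injective (hx.trans (bind_extendRelabel_eq_some_inr.mp hy).symm)]
    rcases hlabel y with ⟨w, hy⟩ | ⟨b, rfl⟩
    · have hx := hxy.trans (bind_extendRelabel_eq_some_inr.mpr hy)
      rw [φ.injective ((bind_extendRelabel_eq_some_inr.mp hx).trans hy.symm)]
    · refine hmerge a b (Option.map_injective (Sum.inl_injective (β := W)) ?_)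
      simpa only [terminal, Equiv.apply_symm_apply, map_inl_bind_extendRelabel] using hxy

theorem t_ident2_eq_interiorDet_mul_det (φ : G.V ≃ Option (k ⊕ W)) {a b : Option k}
    {h : k → Option k'} (hsurj : ∀ b, ∃ a, h a = some b) (hab : a.bind h = b.bind h)
    (hinj : ∀ c d, c.bind h = d.bind h → c = d ∨ c = a ∧ d = b ∨ c = b ∧ d = a) :
    ((G.ident2 (terminal φ a) (terminal φ b)).t : ℝ) =
      interiorDet φ * (relabelMatrix ℝ h * response φ * (relabelMatrix ℝ h)ᵀ).det := by
  refine t_quot_eq_interiorDet_mul_det φ hsurj ?_ fun c d hcd => ?_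
  · rintro x y ⟨rfl, rfl⟩
    simp only [terminal, Equiv.apply_symm_apply, map_inl_bind_extendRelabel, hab]
  · rcases hinj c d hcd with rfl | ⟨rfl, rfl⟩ | ⟨rfl, rfl⟩
    · rfl
    · exact Quot.sound ⟨rfl, rfl⟩
    · exact (Quot.sound ⟨rfl, rfl⟩).symm

end Response

section Glue

open scoped Matrix

variable {G₁ G₂ : WMG} {k W₁ W₂ : Type*}

/-- The labels of both networks in the glued one, in which the terminals and the interior of `G₂`
are the terminals of `G₁`. -/
def glueLabel (φ₁ : G₁.V ≃ Option (k ⊕ W₁)) (φ₂ : G₂.V ≃ Option (k ⊕ W₂)) :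
    (G₁.disjUnion G₂).V → Option ((k ⊕ W₂) ⊕ W₁) :=
  Sum.elim (fun v => (φ₁ v).bind (extendRelabel fun a => some (Sum.inl a)))
    fun v => (φ₂ v).map Sum.inl

theorem glueLabel_surjective (φ₁ : G₁.V ≃ Option (k ⊕ W₁)) (φ₂ : G₂.V ≃ Option (k ⊕ W₂)) :
    (glueLabel φ₁ φ₂).Surjective := by
  rintro (_ | b | w)
  · exact ⟨Sum.inr (φ₂.symm none), by simp [glueLabel]⟩
  · exact ⟨Sum.inr (φ₂.symm (some b)), by simp [glueLabel]⟩
  · exact ⟨Sum.inl (φ₁.symm (some (Sum.inr w))), by simp [glueLabel, extendRelabel]⟩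

theorem glueLabel_inl_eq_inr_iff {φ₁ : G₁.V ≃ Option (k ⊕ W₁)} {φ₂ : G₂.V ≃ Option (k ⊕ W₂)}
    {x : G₁.V} {y : G₂.V} :
    glueLabel φ₁ φ₂ (Sum.inl x) = glueLabel φ₁ φ₂ (Sum.inr y) ↔
      ∃ a, x = terminal φ₁ a ∧ y = terminal φ₂ a := by
  simp only [terminal, Equiv.eq_symm_apply]
  exact bind_extendRelabel_some_inl_eq_map_inl

variable [Fintype k] [DecidableEq k] [Fintype W₁] [DecidableEq W₁] [Fintype W₂] [DecidableEq W₂]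

theorem det_groundedLap_glueLabel (φ₁ : G₁.V ≃ Option (k ⊕ W₁)) (φ₂ : G₂.V ≃ Option (k ⊕ W₂)) :
    ((G₁.disjUnion G₂).groundedLap ℝ (glueLabel φ₁ φ₂)).det =
      interiorDet φ₁ * interiorDet φ₂ * (response φ₁ + response φ₂).det := by
  rw [glueLabel, groundedLap_disjUnion, groundedLap_map_inl, det_groundedLap_extendRelabel_add,
    relabelMatrix_some_inl_mul_mul_transpose, add_comm (Matrix.fromBlocks _ _ _ _),
    det_add_fromBlocks_eq_mul_det_schurCompl (posSemidef_groundedLap G₂ _), ← mul_assoc,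
    add_comm (response φ₁)]
  rfl

theorem t_glue (φ₁ : G₁.V ≃ Option (k ⊕ W₁)) (φ₂ : G₂.V ≃ Option (k ⊕ W₂)) :
    (((G₁.disjUnion G₂).quot fun x y =>
        ∃ a, x = Sum.inl (terminal φ₁ a) ∧ y = Sum.inr (terminal φ₂ a)).t : ℝ) =
      interiorDet φ₁ * interiorDet φ₂ * (response φ₁ + response φ₂).det := by
  rw [← det_groundedLap_glueLabel]
  refine t_quot_eq_det_groundedLap _ (glueLabel_surjective φ₁ φ₂) ?_ ?_
  · rintro _ _ ⟨a, rfl, rfl⟩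
    exact glueLabel_inl_eq_inr_iff.mpr ⟨a, rfl, rfl⟩
  · rintro (x | x) (y | y) h
    · rw [φ₁.injective (bind_extendRelabel_some_inl_injective h)]
    · obtain ⟨a, rfl, rfl⟩ := glueLabel_inl_eq_inr_iff.mp h
      exact Quot.sound ⟨a, rfl, rfl⟩
    · obtain ⟨a, rfl, rfl⟩ := glueLabel_inl_eq_inr_iff.mp h.symm
      exact (Quot.sound ⟨a, rfl, rfl⟩).symm
    · rw [φ₂.injective (Option.map_injective Sum.inl_injective h)]

end Glue

section ThreeTerminals

variable {G : WMG} {W : Type*} [Fintype W] [DecidableEq W]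

theorem exists_terminals_eq {p q s : G.V} (hpq : p ≠ q) (hps : p ≠ s) (hqs : q ≠ s) :
    ∃ (W : Type) (_ : Fintype W) (φ : G.V ≃ Option (Fin 2 ⊕ W)),
      terminal φ none = p ∧ terminal φ (some 0) = q ∧ terminal φ (some 1) = s := by
  have hinj : Function.Injective fun o : Option (Fin 2) => o.elim p ![q, s] := by
    rintro (_ | i) (_ | j) <;> (try fin_cases i) <;> (try fin_cases j) <;> simp_all [eq_comm]
  obtain ⟨φ, hφ⟩ := exists_terminal_eq hinj
  exact ⟨_, inferInstance, φ, by simp [hφ]⟩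

theorem response_one_zero (φ : G.V ≃ Option (Fin 2 ⊕ W)) : response φ 1 0 = response φ 0 1 :=
  (isSymm_response φ).apply 0 1

theorem t_eq_interiorDet_mul (φ : G.V ≃ Option (Fin 2 ⊕ W)) :
    (G.t : ℝ) =
      interiorDet φ * (response φ 0 0 * response φ 1 1 - response φ 0 1 ^ 2) := by
  have hdet := det_add_fromBlocks_eq_mul_det_schurCompl (posSemidef_groundedLap G φ) 0
  rw [Matrix.fromBlocks_zero, add_zero, add_zero] at hdet
  rw [t_eq_det_groundedLap G φ.bijective, hdet]
  change interiorDet φ * (response φ).det = _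
  rw [Matrix.det_fin_two, response_one_zero, sq]

theorem t_ident3_eq_interiorDet (φ : G.V ≃ Option (Fin 2 ⊕ W)) :
    ((G.ident3 (terminal φ none) (terminal φ (some 0)) (terminal φ (some 1))).t : ℝ) =
      interiorDet φ := by
  let r (x y : G.V) : Prop := x = terminal φ none ∧ y = terminal φ (some 0) ∨
    x = terminal φ none ∧ y = terminal φ (some 1)
  have hmerge : ∀ a : Option (Fin 2), Quot.mk r (terminal φ none) = Quot.mk r (terminal φ a)
    | none => rfl
    | some 0 => Quot.sound (r := r) (Or.inl ⟨rfl, rfl⟩)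
    | some 1 => Quot.sound (r := r) (Or.inr ⟨rfl, rfl⟩)
  rw [ident3, t_quot_eq_interiorDet_mul_det φ (h := fun _ => (none : Option Empty)) nofun ?_
    fun a b _ => (hmerge a).symm.trans (hmerge b), Matrix.det_isEmpty, mul_one]
  rintro x y (⟨rfl, rfl⟩ | ⟨rfl, rfl⟩) <;> simp [terminal, extendRelabel]

theorem t_ident2_none_zero (φ : G.V ≃ Option (Fin 2 ⊕ W)) :
    ((G.ident2 (terminal φ none) (terminal φ (some 0))).t : ℝ) =
      interiorDet φ * response φ 1 1 := by
  rw [t_ident2_eq_interiorDet_mul_det φ (h := ![none, some ()]) (by decide) (by decide) (by decide)]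
  simp [relabelMatrix, labelVec, Matrix.mul_apply]

theorem t_ident2_none_one (φ : G.V ≃ Option (Fin 2 ⊕ W)) :
    ((G.ident2 (terminal φ none) (terminal φ (some 1))).t : ℝ) =
      interiorDet φ * response φ 0 0 := by
  rw [t_ident2_eq_interiorDet_mul_det φ (h := ![some (), none]) (by decide) (by decide) (by decide)]
  simp [relabelMatrix, labelVec, Matrix.mul_apply]

theorem t_ident2_zero_one (φ : G.V ≃ Option (Fin 2 ⊕ W)) :
    ((G.ident2 (terminal φ (some 0)) (terminal φ (some 1))).t : ℝ) =
      interiorDet φ * (response φ 0 0 + 2 * response φ 0 1 + response φ 1 1) := by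
  rw [t_ident2_eq_interiorDet_mul_det φ (h := fun _ => some ()) (by decide) (by decide) (by decide)]
  simp only [Matrix.det_unique, Matrix.mul_apply, relabelMatrix, labelVec, Matrix.of_apply,
    Matrix.transpose_apply, Fin.sum_univ_two, response_one_zero, if_true]
  ring

theorem t_glue3 {G₁ G₂ : WMG} {W₁ W₂ : Type*} [Fintype W₁] [DecidableEq W₁] [Fintype W₂]
    [DecidableEq W₂] (φ₁ : G₁.V ≃ Option (Fin 2 ⊕ W₁)) (φ₂ : G₂.V ≃ Option (Fin 2 ⊕ W₂)) :
    ((G₁.glue3 G₂ (terminal φ₁ none) (terminal φ₁ (some 0)) (terminal φ₁ (some 1))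
        (terminal φ₂ none) (terminal φ₂ (some 0)) (terminal φ₂ (some 1))).t : ℝ) =
      interiorDet φ₁ * interiorDet φ₂ *
        ((response φ₁ 0 0 + response φ₂ 0 0) * (response φ₁ 1 1 + response φ₂ 1 1) -
          (response φ₁ 0 1 + response φ₂ 0 1) ^ 2) := by
  have hdet := t_glue φ₁ φ₂
  simp only [Option.exists, Fin.exists_fin_two] at hdet
  rw [glue3, hdet, Matrix.det_fin_two]
  simp only [Matrix.add_apply, response_one_zero, sq]

end ThreeTerminals

end WMG

theorem spanning_trees_of_three_vertex_union_general :
    (∀ (G₁ G₂ : WMG) (p₁ q₁ s₁ : G₁.V) (p₂ q₂ s₂ : G₂.V),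
      p₁ ≠ q₁ → p₁ ≠ s₁ → q₁ ≠ s₁ → p₂ ≠ q₂ → p₂ ≠ s₂ → q₂ ≠ s₂ →
      ((G₁.glue3 G₂ p₁ q₁ s₁ p₂ q₂ s₂).t : ℝ) =
        (G₁.t : ℝ) * ((G₂.ident3 p₂ q₂ s₂).t : ℝ) +
        (G₂.t : ℝ) * ((G₁.ident3 p₁ q₁ s₁).t : ℝ) +
        (1 / 2) *
          (((G₁.ident2 p₁ s₁).t : ℝ) *
              (-((G₂.ident2 p₂ s₂).t : ℝ) + ((G₂.ident2 p₂ q₂).t : ℝ) +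
                ((G₂.ident2 q₂ s₂).t : ℝ)) +
           ((G₁.ident2 p₁ q₁).t : ℝ) *
              (((G₂.ident2 p₂ s₂).t : ℝ) - ((G₂.ident2 p₂ q₂).t : ℝ) +
                ((G₂.ident2 q₂ s₂).t : ℝ)) +
           ((G₁.ident2 q₁ s₁).t : ℝ) *
              (((G₂.ident2 p₂ s₂).t : ℝ) + ((G₂.ident2 p₂ q₂).t : ℝ) -
                ((G₂.ident2 q₂ s₂).t : ℝ)))) ∧
    (∀ (G₀ : WMG) (p q s : G₀.V), p ≠ q → p ≠ s → q ≠ s →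
      (G₀.glue3 G₀ p q s p q s).t = 4 * G₀.t * (G₀.ident3 p q s).t) := by
  refine ⟨fun G₁ G₂ p₁ q₁ s₁ p₂ q₂ s₂ hpq₁ hps₁ hqs₁ hpq₂ hps₂ hqs₂ => ?_,
    fun G₀ p q s hpq hps hqs => ?_⟩
  · obtain ⟨W₁, _, φ₁, rfl, rfl, rfl⟩ := WMG.exists_terminals_eq hpq₁ hps₁ hqs₁
    obtain ⟨W₂, _, φ₂, rfl, rfl, rfl⟩ := WMG.exists_terminals_eq hpq₂ hps₂ hqs₂
    simp only [WMG.t_glue3, WMG.t_eq_interiorDet_mul φ₁, WMG.t_eq_interiorDet_mul φ₂,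
      WMG.t_ident3_eq_interiorDet, WMG.t_ident2_none_zero, WMG.t_ident2_none_one,
      WMG.t_ident2_zero_one]
    ring
  · obtain ⟨W, _, φ, rfl, rfl, rfl⟩ := WMG.exists_terminals_eq hpq hps hqs
    rw [← Nat.cast_inj (R := ℝ)]
    push_cast
    rw [WMG.t_glue3, WMG.t_eq_interiorDet_mul φ, WMG.t_ident3_eq_interiorDet]
    ring

/-- If the connected multigraph `G` is the union of two connected subgraphs
`G₁, G₂` sharing exactly three vertices `p, q, s` (and no edges), then with
`a_i = t(G_{i,ps})`, `b_i = t(G_{i,pq})`, `c_i = t(G_{i,qs})`: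
`t(G) = t(G₁) t(G_{2,pqs}) + t(G₂) t(G_{1,pqs})
  + (1/2)[a₁(-a₂+b₂+c₂) + b₁(a₂-b₂+c₂) + c₁(a₂+b₂-c₂)]`.
In particular, if `G₁ = G₂` glued along the same three vertices, then
`t(G) = 4 t(G₁) t(G_{1,pqs})`. -/
theorem spanning_trees_of_three_vertex_union :
    (∀ (G₁ G₂ : WMG) (p₁ q₁ s₁ : G₁.V) (p₂ q₂ s₂ : G₂.V),
      G₁.Connected → G₂.Connected →
      p₁ ≠ q₁ → p₁ ≠ s₁ → q₁ ≠ s₁ → p₂ ≠ q₂ → p₂ ≠ s₂ → q₂ ≠ s₂ →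
      ((G₁.glue3 G₂ p₁ q₁ s₁ p₂ q₂ s₂).t : ℝ) =
        (G₁.t : ℝ) * ((G₂.ident3 p₂ q₂ s₂).t : ℝ) +
        (G₂.t : ℝ) * ((G₁.ident3 p₁ q₁ s₁).t : ℝ) +
        (1 / 2) *
          (((G₁.ident2 p₁ s₁).t : ℝ) *
              (-((G₂.ident2 p₂ s₂).t : ℝ) + ((G₂.ident2 p₂ q₂).t : ℝ) +
                ((G₂.ident2 q₂ s₂).t : ℝ)) +
           ((G₁.ident2 p₁ q₁).t : ℝ) *
              (((G₂.ident2 p₂ s₂).t : ℝ) - ((G₂.ident2 p₂ q₂).t : ℝ) +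
                ((G₂.ident2 q₂ s₂).t : ℝ)) +
           ((G₁.ident2 q₁ s₁).t : ℝ) *
              (((G₂.ident2 p₂ s₂).t : ℝ) + ((G₂.ident2 p₂ q₂).t : ℝ) -
                ((G₂.ident2 q₂ s₂).t : ℝ)))) ∧
    (∀ (G₀ : WMG) (p q s : G₀.V), G₀.Connected → p ≠ q → p ≠ s → q ≠ s →
      (G₀.glue3 G₀ p q s p q s).t = 4 * G₀.t * (G₀.ident3 p q s).t) := by
  exact ⟨fun G₁ G₂ p₁ q₁ s₁ p₂ q₂ s₂ _ _ =>
    spanning_trees_of_three_vertex_union_general.1 G₁ G₂ p₁ q₁ s₁ p₂ q₂ s₂,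
    fun G₀ p q s _ => spanning_trees_of_three_vertex_union_general.2 G₀ p q s⟩
end

section
/- Let a ≥ 1 and n ≥ 2 be integers and let W̄_n be the modified wheel graph: the cycle graph C_n with vertices p₁, …, p_n together with one new hub vertex p joined to each p_i by a parallel edges. Then t(W̄_n) = a·W_{n−1}(a), where W_m(x) = Σ_{k=0}^{m} ((2m+2)/(m+2+k))·C(m+2+k, m−k)·x^k. In particular, when a = 1, t(W_n) = L_{2n} − 2, where L_m is the m-th Lucas number. -/
open scoped Classical

/-!
Rooting the spanning trees of the wheel at the hub turns them into choices, for every rim vertex,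
of a first step towards the hub: the next rim vertex, the previous one, or one of the `a` spokes.
Such a choice comes from a tree exactly when nowhere around the rim "next" is followed by "prev"
and the choice is neither constantly "next" nor constantly "prev". Cyclic words of length `n` over
`a + 2` letters avoiding one such pattern are counted by the trace of the `n`-th power of a
transfer matrix of rank two, that is, by the value at `a + 2` of the Dickson polynomial `D_n`
(`D_n(u + u⁻¹) = u ^ n + u⁻¹ ^ n`). Hence `t(W̄_n) = D_n(a + 2) - 2`; the formula for `W_{n-1}`
is the expansion of `D_n(x + 2) - 2` in powers of `x`, and `D_n(3) = L_{2n}`.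
-/

lemma exists_lt_of_forall_reflTransGen {V : Type*} {R : V → V → Prop} {r : V}
    (h : ∀ v, Relation.ReflTransGen R v r) :
    ∃ d : V → ℕ, ∀ v ≠ r, ∃ u, R v u ∧ d u < d v := by
  let pred (S : Set V) : Set V := {v | ∃ u ∈ S, R v u}
  have mem_iterate (v : V) : ∃ k, v ∈ pred^[k] {r} := by
    induction h v using Relation.ReflTransGen.head_induction_on with
    | refl => exact ⟨0, rfl⟩
    | head huv _ ih =>
      obtain ⟨k, hk⟩ := ih
      exact ⟨k + 1, by rw [Function.iterate_succ_apply']; exact ⟨_, hk, huv⟩⟩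
  refine ⟨fun v => Nat.find (mem_iterate v), fun v hv => ?_⟩
  have hspec := Nat.find_spec (mem_iterate v)
  rcases hk : Nat.find (mem_iterate v) with _ | k
  · rw [hk] at hspec
    exact absurd hspec hv
  · rw [hk, Function.iterate_succ_apply'] at hspec
    obtain ⟨u, hu, hvu⟩ := hspec
    exact ⟨u, hvu, (Nat.find_min' _ hu).trans_lt (k.lt_succ_self.trans_eq hk.symm)⟩

namespace WMG

section Arborescence

variable {G : WMG} {r : G.V}

/-- The edge `e` has endpoints `u` and `v`, in either order. -/
def Joins (G : WMG) (e : G.E) (u v : G.V) : Prop :=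
  G.ends e = (u, v) ∨ G.ends e = (v, u)

lemma Joins.symm {e : G.E} {u v : G.V} (h : G.Joins e u v) : G.Joins e v u :=
  Or.symm h

lemma Joins.eq_or_eq {e : G.E} {u v x y : G.V} (h : G.Joins e u v) (h' : G.Joins e x y) :
    x = u ∧ y = v ∨ x = v ∧ y = u := by
  grind [Joins]

lemma Joins.right_unique {e : G.E} {u v w : G.V} (hv : G.Joins e u v) (hw : G.Joins e u w) :
    v = w := by
  grind [Joins]

/-- In the assignment `f` of a parent edge to every vertex other than the root, `v` is the parent
of `u`: it is the other end of the parent edge of `u`. -/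
def IsParent (f : {v : G.V // v ≠ r} → G.E) (u v : G.V) : Prop :=
  ∃ hu : u ≠ r, G.Joins (f ⟨u, hu⟩) u v

/-- The assignment `f` of a parent edge to every vertex other than `r` is an arborescence rooted
at `r`: passing from parent to parent leads from every vertex to `r`. -/
def IsArborescence (f : {v : G.V // v ≠ r} → G.E) : Prop :=
  ∀ v, Relation.ReflTransGen (IsParent f) v r

lemma IsParent.right_unique {f : {v : G.V // v ≠ r} → G.E} {u v w : G.V}
    (hv : IsParent f u v) (hw : IsParent f u w) : v = w :=
  hv.choose_spec.right_unique hw.choose_spec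

lemma IsArborescence.exists_isParent {f : {v : G.V // v ≠ r} → G.E} (hf : IsArborescence f)
    {u : G.V} (hu : u ≠ r) : ∃ v, IsParent f u v := by
  obtain rfl | ⟨v, huv, -⟩ := (hf u).cases_head
  exacts [absurd rfl hu, ⟨v, huv⟩]

lemma IsArborescence.root_mem_of_closed {f : {v : G.V // v ≠ r} → G.E} (hf : IsArborescence f)
    {S : Set G.V} (hS : S.Nonempty) (closed : ∀ u ∈ S, ∀ v, IsParent f u v → v ∈ S) : r ∈ S := by
  obtain ⟨u, hu⟩ := hS
  induction hf u using Relation.ReflTransGen.head_induction_on with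
  | refl => exact hu
  | head huv _ ih => exact ih (closed _ hu _ huv)

lemma IsArborescence.injective {f : {v : G.V // v ≠ r} → G.E} (hf : IsArborescence f) :
    Function.Injective f := by
  rintro ⟨u, hu⟩ ⟨v, hv⟩ (huv : f ⟨u, hu⟩ = f ⟨v, hv⟩)
  by_contra hne
  rw [Subtype.mk.injEq] at hne
  obtain ⟨x, _, hux⟩ := hf.exists_isParent hu
  obtain ⟨y, _, hvy⟩ := hf.exists_isParent hv
  rw [huv] at hux
  obtain ⟨rfl, rfl⟩ : v = x ∧ y = u := (hux.eq_or_eq hvy).resolve_left fun h => hne h.1.symm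
  -- Two vertices with the same parent edge would be each other's parents.
  have hr : r ∈ ({y, v} : Set G.V) := by
    refine hf.root_mem_of_closed ⟨y, Set.mem_insert y {v}⟩ ?_
    rintro w (rfl | rfl) z hz
    · exact .inr (hz.right_unique ⟨hu, huv ▸ hux⟩)
    · exact .inl (hz.right_unique ⟨hv, hvy⟩)
  exact hr.elim (fun h => hu h.symm) fun h => hv h.symm

lemma IsArborescence.eq_of_range_eq {f g : {v : G.V // v ≠ r} → G.E} (hf : IsArborescence f)
    (hg : IsArborescence g) (hfg : Set.range f = Set.range g) : f = g := by
  have agree : ∀ u, ∀ hu : u ≠ r, f ⟨u, hu⟩ = g ⟨u, hu⟩ := fun u => by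
    induction hf u using Relation.ReflTransGen.head_induction_on with
    | refl => exact fun hu => absurd rfl hu
    | @head u v huv _ ih =>
      intro hu
      obtain ⟨⟨w, hw⟩, hgw⟩ : f ⟨u, hu⟩ ∈ Set.range g := hfg ▸ Set.mem_range_self _
      obtain ⟨x, _, hwx⟩ := hg.exists_isParent hw
      rw [hgw] at hwx
      obtain rfl | rfl : w = u ∨ w = v := (huv.2.eq_or_eq hwx).imp And.left And.left
      · exact hgw.symm
      · have hfw : f ⟨w, hw⟩ = f ⟨u, hu⟩ := (ih hw).trans hgw
        obtain rfl : w = u := congrArg Subtype.val (hf.injective hfw)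
        exact hgw.symm
  exact funext fun u => agree u u.2

lemma IsArborescence.isSpanningTree {f : {v : G.V // v ≠ r} → G.E} (hf : IsArborescence f) :
    G.IsSpanningTree (Finset.univ.image f) := by
  refine ⟨fun u v => ?_, ?_⟩
  · have to_root (w : G.V) : Relation.ReflTransGen
        (fun x y => ∃ e ∈ Finset.univ.image f, G.Joins e x y) w r :=
      Relation.ReflTransGen.mono (fun _ _ ⟨hx, hxy⟩ =>
        ⟨f ⟨_, hx⟩, Finset.mem_image_of_mem f (Finset.mem_univ _), hxy⟩) _ _ (hf w)
    have : Std.Symm fun x y => ∃ e ∈ Finset.univ.image f, G.Joins e x y :=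
      ⟨fun x y ⟨e, he, h⟩ => ⟨e, he, h.symm⟩⟩
    exact (to_root u).trans (symm_of (Relation.ReflTransGen _) (to_root v))
  · rw [Finset.card_image_of_injective _ hf.injective, Finset.card_univ]
    simp

lemma isArborescence_of_lt {f : {v : G.V // v ≠ r} → G.E} (d : G.V → ℕ)
    (h : ∀ v ≠ r, ∃ u, IsParent f v u ∧ d u < d v) : IsArborescence f := by
  intro v
  induction hv : d v using Nat.strong_induction_on generalizing v with
  | _ k ih =>
    by_cases hr : v = r
    · rw [hr]
    · obtain ⟨u, hvu, hlt⟩ := h v hr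
      exact .head hvu (ih (d u) (hv ▸ hlt) u rfl)

lemma IsSpanningTree.exists_isArborescence {T : Finset G.E} (hT : G.IsSpanningTree T) (r : G.V) :
    ∃ f : {v : G.V // v ≠ r} → G.E, IsArborescence f ∧ Finset.univ.image f = T := by
  obtain ⟨d, hd⟩ := exists_lt_of_forall_reflTransGen fun v => hT.1 v r
  have parent (v : {v : G.V // v ≠ r}) : ∃ e ∈ T, ∃ u, G.Joins e v u ∧ d u < d v := by
    obtain ⟨u, ⟨e, he, hvu⟩, hlt⟩ := hd v v.2
    exact ⟨e, he, u, hvu, hlt⟩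
  choose f hfT u hfu hlt using parent
  have hf : IsArborescence f := isArborescence_of_lt d fun v hv =>
    ⟨u ⟨v, hv⟩, ⟨hv, hfu ⟨v, hv⟩⟩, hlt ⟨v, hv⟩⟩
  refine ⟨f, hf, Finset.eq_of_subset_of_card_le ?_ ?_⟩
  · simpa [Finset.image_subset_iff] using fun v hv => hfT ⟨v, hv⟩
  · rw [hT.2, hf.isSpanningTree.2]

theorem t_eq_ncard_isArborescence (r : G.V) :
    G.t = {f : {v : G.V // v ≠ r} → G.E | IsArborescence f}.ncard := by
  have himage : (fun f : {v : G.V // v ≠ r} → G.E => Finset.univ.image f) '' {f | IsArborescence f}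
      = {T | G.IsSpanningTree T} := by
    ext T
    exact ⟨fun ⟨_, hf, hfT⟩ => hfT ▸ hf.isSpanningTree, fun hT => hT.exists_isArborescence r⟩
  rw [t, ← Set.coe_ofPred, Nat.card_coe_set_eq, ← himage, Set.InjOn.ncard_image]
  intro f hf g hg hfg
  exact hf.eq_of_range_eq hg (by simpa using congrArg ((↑) : _ → Set G.E) hfg)

end Arborescence

end WMG

section CyclicWords

open Polynomial

open Fin.CommRing in
lemma forall_of_forall_add_one {n : ℕ} [NeZero n] {P : Fin n → Prop} {i : Fin n} (hi : P i)
    (step : ∀ j, P j → P (j + 1)) (j : Fin n) : P j := by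
  have shift (l : ℕ) : P (i + l) := by
    induction l with
    | zero => simpa using hi
    | succ l ih => simpa [add_assoc] using step _ ih
  simpa using shift (j - i : Fin n).val

lemma forall_of_forall_sub_one {n : ℕ} [NeZero n] {P : Fin n → Prop} {i : Fin n} (hi : P i)
    (step : ∀ j, P j → P (j - 1)) (j : Fin n) : P j := by
  by_contra hj
  exact forall_of_forall_add_one (P := fun j => ¬ P j) hj
    (fun k hk hk' => hk (by simpa using step _ hk')) i hi

/-- The cyclic word `f` does not contain the letter `x` immediately followed by the letter `y`. -/
def CyclicallyAvoids {n : ℕ} [NeZero n] {C : Type*} (x y : C) (f : Fin n → C) : Prop :=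
  ∀ i, ¬ (f i = x ∧ f (i + 1) = y)

lemma cyclicallyAvoids_const {n : ℕ} [NeZero n] {C : Type*} {x y : C} (hxy : x ≠ y) (z : C) :
    CyclicallyAvoids x y fun _ : Fin n => z :=
  fun _ h => hxy (h.1.symm.trans h.2)

variable {C R : Type*} [Fintype C]

lemma sum_prod_path_eq [DecidableEq C] [CommSemiring R]
    (M : Matrix C C R) (m : ℕ) (g : C → C → R) :
    ∑ f : Fin (m + 1) → C,
        (∏ i : Fin m, M (f i.castSucc) (f i.succ)) * g (f (Fin.last m)) (f 0) =
      ∑ x, ∑ y, (M ^ m) x y * g y x := by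
  induction m generalizing g with
  | zero =>
    rw [← (Equiv.funUnique (Fin 1) C).symm.sum_comp]
    simp [Matrix.one_apply]
  | succ m ih =>
    rw [← (Fin.consEquiv fun _ : Fin (m + 2) => C).sum_comp, Fintype.sum_prod_type]
    refine Finset.sum_congr rfl fun x _ => ?_
    calc
      _ = ∑ f : Fin (m + 1) → C, (∏ i : Fin m, M (f i.castSucc) (f i.succ)) *
            (M x (f 0) * g (f (Fin.last m)) x) := by
        simp only [Fin.consEquiv_apply, Fin.prod_univ_succ, Fin.castSucc_zero, Fin.cons_zero,
          Fin.cons_succ, ← Fin.succ_castSucc, ← Fin.succ_last]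
        exact Finset.sum_congr rfl fun f _ => by ring
      _ = ∑ z, ∑ y, (M ^ m) z y * (M x z * g y x) := ih fun y z => M x z * g y x
      _ = ∑ y, (M ^ (m + 1)) x y * g y x := by
        rw [Finset.sum_comm]
        simp only [pow_succ', Matrix.mul_apply, Finset.sum_mul]
        exact Finset.sum_congr rfl fun y _ => Finset.sum_congr rfl fun z _ => by ring

lemma sum_prod_cycle_eq_trace [DecidableEq C] [CommSemiring R] (M : Matrix C C R) (m : ℕ) :
    ∑ f : Fin (m + 1) → C, ∏ i, M (f i) (f (i + 1)) = (M ^ (m + 1)).trace := by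
  simp only [Fin.prod_univ_castSucc, Fin.coeSucc_eq_succ, Fin.last_add_one]
  rw [sum_prod_path_eq M m M, pow_succ]
  simp only [Matrix.trace, Matrix.diag_apply, Matrix.mul_apply]

lemma trace_mul_pow_comm {m n : Type*} [Fintype m] [Fintype n] [DecidableEq m] [DecidableEq n]
    [CommSemiring R] (A : Matrix m n R) (B : Matrix n m R) (k : ℕ) :
    ((A * B) ^ (k + 1)).trace = ((B * A) ^ (k + 1)).trace := by
  have mul_pow_succ (l : ℕ) : (A * B) ^ (l + 1) = A * ((B * A) ^ l * B) := by
    induction l with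
    | zero => simp
    | succ l ih => rw [pow_succ, ih, pow_succ]; simp only [Matrix.mul_assoc]
  rw [mul_pow_succ, Matrix.trace_mul_comm, Matrix.mul_assoc, ← pow_succ]

lemma trace_pow_eq_eval_dickson [CommRing R] (A : Matrix (Fin 2) (Fin 2) R) (n : ℕ) :
    (A ^ n).trace = (dickson 1 A.det n).eval A.trace := by
  have cayley_hamilton : A ^ 2 = A.trace • A - A.det • 1 := by
    nontriviality R
    have h := A.aeval_self_charpoly
    simp only [A.charpoly_fin_two, map_add, map_sub, map_mul, map_pow, aeval_X, aeval_C,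
      Algebra.algebraMap_eq_smul_one, smul_one_mul] at h
    rw [← sub_eq_zero, ← h]
    abel
  induction n using Nat.twoStepInduction with
  | zero => norm_num
  | one => simp
  | more n ih₀ ih₁ =>
    rw [pow_add, cayley_hamilton, mul_sub, Matrix.mul_smul, Matrix.mul_smul, mul_one, ← pow_succ,
      Matrix.trace_sub, Matrix.trace_smul, Matrix.trace_smul, ih₀, ih₁, dickson_add_two]
    simp

theorem ncard_cyclicallyAvoids [CommRing R] {x y : C} (hxy : x ≠ y)
    (n : ℕ) [NeZero n] :
    ({f : Fin n → C | CyclicallyAvoids x y f}.ncard : R) =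
      (dickson 1 1 n).eval (Fintype.card C : R) := by
  obtain ⟨m, rfl⟩ := Nat.exists_eq_succ_of_ne_zero (NeZero.ne n)
  -- The transfer matrix has rank two: its entry at `(c, d)` is `1 - [c = x] * [d = y]`.
  let U : Matrix C (Fin 2) R := .of fun c => ![1, if c = x then 1 else 0]
  let W : Matrix (Fin 2) C R := .of ![fun _ => 1, fun d => if d = y then -1 else 0]
  have transfer (c d : C) : (U * W) c d = if c = x ∧ d = y then 0 else 1 := by
    by_cases hc : c = x <;> by_cases hd : d = y <;>
      simp [U, W, Matrix.mul_apply, Fin.sum_univ_two, hc, hd]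
  have compressed : W * U = !![(Fintype.card C : R), 1; -1, 0] := by
    ext i j
    fin_cases i <;> fin_cases j <;> simp [U, W, Matrix.mul_apply, hxy]
  have indicator (f : Fin (m + 1) → C) :
      ∏ i, (U * W) (f i) (f (i + 1)) = if CyclicallyAvoids x y f then 1 else 0 := by
    by_cases hf : CyclicallyAvoids x y f
    · rw [if_pos hf]
      exact Finset.prod_eq_one fun i _ => (transfer _ _).trans (if_neg (hf i))
    · obtain ⟨i, hi⟩ := not_forall_not.1 hf
      rw [if_neg hf]
      exact Finset.prod_eq_zero (Finset.mem_univ i) ((transfer _ _).trans (if_pos hi))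
  calc
    ({f : Fin (m + 1) → C | CyclicallyAvoids x y f}.ncard : R)
      = ∑ f : Fin (m + 1) → C, ∏ i, (U * W) (f i) (f (i + 1)) := by
        simp only [indicator, Finset.sum_boole, Set.ncard_eq_toFinset_card', Set.toFinset_ofPred]
    _ = ((W * U) ^ (m + 1)).trace := by rw [sum_prod_cycle_eq_trace, trace_mul_pow_comm]
    _ = (dickson 1 1 (m + 1)).eval (Fintype.card C : R) := by
        rw [trace_pow_eq_eval_dickson, compressed, Matrix.det_fin_two_of, Matrix.trace_fin_two_of]
        simp

end CyclicWords

section Dickson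

open Polynomial

variable {R : Type*} [CommRing R]

lemma choose_add_two_add_choose (p q : ℕ) :
    (p + 2).choose (q + 2) + p.choose (q + 2) = 2 * (p + 1).choose (q + 2) + p.choose q := by
  simp only [Nat.choose_succ_succ']
  ring

lemma coeff_dickson_comp_X_add_two (n k : ℕ) :
    ((dickson 1 (1 : R) (n + 1)).comp (X + C 2)).coeff k =
      ((n + 1 + k).choose (2 * k) + (n + k).choose (2 * k) : ℕ) := by
  induction n using Nat.twoStepInduction generalizing k with
  | zero =>
    rcases k with _ | _ | k
    · simp
    · simp [coeff_X]
    · rw [Nat.choose_eq_zero_of_lt (by omega), Nat.choose_eq_zero_of_lt (by omega)]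
      simp [coeff_X]
  | one =>
    have hdickson : (dickson 1 (1 : R) 2).comp (X + C 2) = X ^ 2 + C 4 * X + C 2 := by
      rw [dickson_add_two, dickson_one, dickson_zero]
      simp only [X_comp, sub_comp, mul_comp, map_one, one_comp, map_ofNat, ofNat_comp, Nat.cast_one,
        Nat.cast_ofNat]
      ring
    rw [hdickson]
    rcases k with _ | _ | _ | k
    · simp
    · simp
    · simp
    · rw [Nat.choose_eq_zero_of_lt (by omega), Nat.choose_eq_zero_of_lt (by omega)]
      simp
  | more n ih₀ ih₁ =>
    rw [dickson_add_two, sub_comp, mul_comp, mul_comp, X_comp, C_comp, C_1, one_mul, coeff_sub,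
      ih₀, add_mul, coeff_add, coeff_C_mul, ih₁]
    rcases k with _ | k
    · norm_num
    · have h₁ := choose_add_two_add_choose (n + k + 2) (2 * k)
      have h₂ := choose_add_two_add_choose (n + k + 1) (2 * k)
      rw [coeff_X_mul, ih₁, sub_eq_iff_eq_add]
      norm_cast
      refine congrArg Nat.cast ?_
      ring_nf at h₁ h₂ ⊢
      omega

lemma choose_add_choose_eq_div_mul_choose {K : Type*} [Field K] [CharZero K] {m k : ℕ} (h : k ≤ m) :
    ((m + k + 2).choose (2 * k + 2) + (m + k + 1).choose (2 * k + 2) : K) =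
      (2 * m + 2) / (m + 2 + k) * (m + 2 + k).choose (m - k) := by
  have hsymm : (m + 2 + k).choose (m - k) = (m + k + 2).choose (2 * k + 2) := by
    rw [add_right_comm, Nat.choose_symm_of_eq_add (show m + k + 2 = (m - k) + (2 * k + 2) by omega)]
  have hsucc : ((m + k + 1).choose (2 * k + 2) : K) * (m + k + 2) =
      (m + k + 2).choose (2 * k + 2) * (m - k) := by
    have := Nat.choose_mul_succ_eq (m + k + 1) (2 * k + 2)
    rw [show m + k + 1 + 1 - (2 * k + 2) = m - k by omega] at this
    rw [← Nat.cast_sub h]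
    exact_mod_cast this
  have hne : (m + 2 + k : K) ≠ 0 := by exact_mod_cast (by omega : m + 2 + k ≠ 0)
  rw [hsymm]
  field_simp
  linear_combination hsucc

lemma eval_dickson_add_two (m : ℕ) (x : ℝ) :
    (dickson 1 1 (m + 1)).eval (x + 2) = 2 + x * wheelPoly m x := by
  let p : ℝ[X] := (dickson 1 1 (m + 1)).comp (X + C 2)
  have hdeg : p.natDegree < m + 2 := by
    rw [Nat.lt_succ_iff, natDegree_le_iff_coeff_eq_zero]
    intro k hk
    rw [coeff_dickson_comp_X_add_two, Nat.choose_eq_zero_of_lt (by omega),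
      Nat.choose_eq_zero_of_lt (by omega)]
    simp
  have hcoeff (k : ℕ) (hk : k ≤ m) : p.coeff (k + 1) =
      (2 * m + 2) / (m + 2 + k) * (m + 2 + k).choose (m - k) := by
    rw [← choose_add_choose_eq_div_mul_choose hk, coeff_dickson_comp_X_add_two]
    push_cast
    ring_nf
  calc
    (dickson 1 1 (m + 1)).eval (x + 2) = p.eval x := by simp [p]
    _ = ∑ k ∈ Finset.range (m + 1), p.coeff (k + 1) * x ^ (k + 1) + p.coeff 0 := by
      rw [eval_eq_sum_range' hdeg, Finset.sum_range_succ', pow_zero, mul_one]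
    _ = 2 + x * wheelPoly m x := by
      rw [coeff_dickson_comp_X_add_two, wheelPoly, Finset.mul_sum, add_comm]
      congr 1
      · norm_num
      · refine Finset.sum_congr rfl fun k hk => ?_
        rw [hcoeff k (Finset.mem_range_succ_iff.1 hk)]
        ring

lemma eval_three_dickson (n : ℕ) : (dickson 1 1 n).eval (3 : R) = lucas (2 * n) := by
  induction n using Nat.twoStepInduction with
  | zero => norm_num [lucas]
  | one => simp [lucas]
  | more n ih₀ ih₁ =>
    rw [dickson_add_two, eval_sub, eval_mul, eval_mul, eval_X, eval_C, ih₀, ih₁]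
    simp only [mul_add, mul_one, lucas]
    push_cast
    ring

end Dickson

namespace WMG

/-- The ways in which a rim vertex of the wheel can be left: along the rim in either direction,
or along one of its `a` spokes. -/
inductive WheelStep (a : ℕ)
  | next
  | prev
  | spoke (k : Fin a)

namespace WheelStep

/-- Steps as elements of a type of known cardinality. -/
def equivOption (a : ℕ) : WheelStep a ≃ Option (Option (Fin a)) where
  toFun
    | next => none
    | prev => some none
    | spoke k => some (some k)
  invFun
    | none => next
    | some none => prev
    | some (some k) => spoke k
  left_inv := by rintro (_ | _ | _) <;> rfl
  right_inv := by rintro (_ | _ | _) <;> rfl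

instance (a : ℕ) : Fintype (WheelStep a) := Fintype.ofEquiv _ (equivOption a).symm

lemma card_eq (a : ℕ) : Fintype.card (WheelStep a) = a + 2 := by
  simp [Fintype.card_congr (equivOption a)]

variable {n a : ℕ} [NeZero n]

/-- The edge traversed by a step from the rim vertex `i`. -/
def edge (i : Fin n) : WheelStep a → (wheelGraph n a).E
  | next => .inl i
  | prev => .inl (i - 1)
  | spoke k => .inr ⟨i, k⟩

/-- The vertex at which a step from the rim vertex `i` arrives; `none` is the hub. -/
def target (i : Fin n) : WheelStep a → (wheelGraph n a).V
  | next => some (i + 1)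
  | prev => some (i - 1)
  | spoke _ => none

lemma edge_injective (hn : 2 ≤ n) (i : Fin n) : Function.Injective (edge (a := a) i) := by
  have hi : i ≠ i - 1 := fun h => by
    have hn' : n = 1 := Fin.one_eq_zero_iff.1 (sub_eq_self.1 h.symm)
    omega
  rintro (_ | _ | k) (_ | _ | l) h
  all_goals simp_all [edge, wheelGraph, cone, cycle]

end WheelStep

open WheelStep

variable {n a : ℕ} [NeZero n]

lemma finSucc_eq_add_one (i : Fin n) : finSucc i = i + 1 := by
  ext
  simp [finSucc, Fin.val_add]

lemma joins_rim_iff {i : Fin n} {e : (wheelGraph n a).E} {v : (wheelGraph n a).V} :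
    (wheelGraph n a).Joins e (some i) v ↔ ∃ c, edge i c = e ∧ target i c = v := by
  have ends_rim (j : Fin n) : (wheelGraph n a).ends (.inl j) = (some j, some (j + 1)) :=
    congrArg (fun k : Fin n => (some j, some k)) (finSucc_eq_add_one j)
  constructor
  · rintro (h | h) <;> rcases e with (j : Fin n) | ⟨j, k⟩
    · obtain ⟨h₁, h₂⟩ := Prod.mk.inj ((ends_rim j).symm.trans h)
      obtain rfl : j = i := Option.some.inj h₁
      exact ⟨next, rfl, h₂⟩
    · cases (Prod.mk.inj h).1
    · obtain ⟨h₁, h₂⟩ := Prod.mk.inj ((ends_rim j).symm.trans h)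
      obtain rfl : j + 1 = i := Option.some.inj h₂
      exact ⟨prev, congrArg Sum.inl (add_sub_cancel_right j 1),
        (congrArg some (add_sub_cancel_right j 1)).trans h₁⟩
    · obtain ⟨h₁, h₂⟩ := Prod.mk.inj h
      obtain rfl : j = i := Option.some.inj h₂
      exact ⟨spoke k, rfl, h₁⟩
  · rintro ⟨_ | _ | k, rfl, rfl⟩
    · exact .inl (ends_rim i)
    · exact .inr ((ends_rim (i - 1)).trans
        (congrArg (fun k : Fin n => (some (i - 1), some k)) (sub_add_cancel i 1)))
    · exact .inr rfl

/-- The parent edges given by a choice of one step from every rim vertex. -/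
def parentEdge (c : Fin n → WheelStep a) (v : {v : (wheelGraph n a).V // v ≠ none}) :
    (wheelGraph n a).E :=
  let i : Fin n := Option.get v.1 (Option.isSome_iff_ne_none.2 v.2)
  edge i (c i)

lemma isParent_parentEdge (c : Fin n → WheelStep a) (i : Fin n) :
    IsParent (parentEdge c) (some i) (target i (c i)) :=
  ⟨Option.some_ne_none i, joins_rim_iff.2 ⟨c i, rfl, rfl⟩⟩

lemma isParent_parentEdge_iff {c : Fin n → WheelStep a} {i : Fin n} {v : (wheelGraph n a).V} :
    IsParent (parentEdge c) (some i) v ↔ v = target i (c i) :=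
  ⟨fun h => h.right_unique (isParent_parentEdge c i), fun h => h ▸ isParent_parentEdge c i⟩

lemma isArborescence_parentEdge {c : Fin n → WheelStep a} (avoids : CyclicallyAvoids next prev c)
    (hnext : c ≠ fun _ => next) (hprev : c ≠ fun _ => prev) : IsArborescence (parentEdge c) := by
  let Reaches (i : Fin n) : Prop := Relation.ReflTransGen (IsParent (parentEdge c)) (some i) none
  have reaches_of_target {i j : Fin n} (hij : target i (c i) = some j) (hj : Reaches j) :
      Reaches i := .head (isParent_parentEdge_iff.2 hij.symm) hj
  have reaches_of_spoke {i : Fin n} {k : Fin a} (hi : c i = spoke k) : Reaches i :=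
    .single (isParent_parentEdge_iff.2 (by rw [hi]; rfl))
  -- A rim vertex whose path misses the hub forces its successor (predecessor) to do the same
  -- with the same step, so that all steps agree.
  have reaches_of_next {i : Fin n} (hi : c i = next) : Reaches i := by
    by_contra hreach
    refine hnext <| funext fun j => (forall_of_forall_add_one
      (P := fun j => c j = next ∧ ¬ Reaches j) ⟨hi, hreach⟩ ?_ j).1
    rintro j ⟨hj, hjr⟩
    have hjr' : ¬ Reaches (j + 1) := fun h => hjr (reaches_of_target (by rw [hj]; rfl) h)
    match hc : c (j + 1) with
    | next => exact ⟨rfl, hjr'⟩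
    | prev => exact absurd ⟨hj, hc⟩ (avoids j)
    | spoke k => exact absurd (reaches_of_spoke hc) hjr'
  have reaches_of_prev {i : Fin n} (hi : c i = prev) : Reaches i := by
    by_contra hreach
    refine hprev <| funext fun j => (forall_of_forall_sub_one
      (P := fun j => c j = prev ∧ ¬ Reaches j) ⟨hi, hreach⟩ ?_ j).1
    rintro j ⟨hj, hjr⟩
    have hjr' : ¬ Reaches (j - 1) := fun h => hjr (reaches_of_target (by rw [hj]; rfl) h)
    match hc : c (j - 1) with
    | next => exact absurd ⟨hc, by rwa [sub_add_cancel]⟩ (avoids (j - 1))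
    | prev => exact ⟨rfl, hjr'⟩
    | spoke k => exact absurd (reaches_of_spoke hc) hjr'
  rintro (_ | i)
  · exact .refl
  · match hi : c i with
    | next => exact reaches_of_next hi
    | prev => exact reaches_of_prev hi
    | spoke k => exact reaches_of_spoke hi

lemma IsArborescence.exists_spoke {c : Fin n → WheelStep a} (hc : IsArborescence (parentEdge c)) :
    ∃ i k, c i = spoke k := by
  by_contra! hspoke
  have hub_mem : none ∈ Set.range (some : Fin n → (wheelGraph n a).V) := by
    refine hc.root_mem_of_closed (Set.range_nonempty _) ?_
    rintro _ ⟨i, rfl⟩ v hv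
    rw [isParent_parentEdge_iff.1 hv]
    match hi : c i with
    | next => exact ⟨i + 1, rfl⟩
    | prev => exact ⟨i - 1, rfl⟩
    | spoke k => exact absurd hi (hspoke i k)
  obtain ⟨i, ⟨⟩⟩ := hub_mem

lemma IsArborescence.cyclicallyAvoids {c : Fin n → WheelStep a}
    (hc : IsArborescence (parentEdge c)) : CyclicallyAvoids next prev c := by
  rintro i ⟨hi, hi'⟩
  have hub_mem : none ∈ ({some i, some (i + 1)} : Set (wheelGraph n a).V) := by
    refine hc.root_mem_of_closed (Set.insert_nonempty _ _) ?_
    rintro _ (rfl | rfl) v hv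
    · rw [isParent_parentEdge_iff.1 hv, hi]
      exact .inr rfl
    · rw [isParent_parentEdge_iff.1 hv, hi']
      exact .inl (congrArg some (add_sub_cancel_right i 1))
  obtain h | h := hub_mem <;> cases h

theorem isArborescence_parentEdge_iff {c : Fin n → WheelStep a} :
    IsArborescence (parentEdge c) ↔
      CyclicallyAvoids next prev c ∧ c ≠ (fun _ => next) ∧ c ≠ fun _ => prev := by
  refine ⟨fun hc => ⟨hc.cyclicallyAvoids, ?_, ?_⟩, fun ⟨h, h', h''⟩ =>
    isArborescence_parentEdge h h' h''⟩
  all_goals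
    rintro rfl
    obtain ⟨_, k, hk⟩ := hc.exists_spoke
    cases hk

lemma parentEdge_injective (hn : 2 ≤ n) : Function.Injective (parentEdge (n := n) (a := a)) :=
  fun _ _ h => funext fun i => edge_injective hn i (congrFun h ⟨some i, Option.some_ne_none i⟩)

lemma IsArborescence.exists_parentEdge_eq
    {f : {v : (wheelGraph n a).V // v ≠ none} → (wheelGraph n a).E} (hf : IsArborescence f) :
    ∃ c, parentEdge c = f := by
  have incident (i : Fin n) : ∃ c, edge i c = f ⟨some i, Option.some_ne_none i⟩ := by
    obtain ⟨v, _, hv⟩ := hf.exists_isParent (Option.some_ne_none i)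
    obtain ⟨c, hc, -⟩ := joins_rim_iff.1 hv
    exact ⟨c, hc⟩
  choose c hc using incident
  refine ⟨c, funext ?_⟩
  rintro ⟨_ | i, hi⟩
  exacts [absurd rfl hi, hc i]

theorem t_wheelGraph_add_two (hn : 2 ≤ n) :
    (wheelGraph n a).t + 2 =
      {c : Fin n → WheelStep a | CyclicallyAvoids next prev c}.ncard := by
  have hne : (next : WheelStep a) ≠ prev := nofun
  have hconst : {fun _ => next, fun _ => prev} ⊆
      {c : Fin n → WheelStep a | CyclicallyAvoids next prev c} := by
    rintro _ (rfl | rfl)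
    exacts [cyclicallyAvoids_const hne _, cyclicallyAvoids_const hne _]
  have hpreimage : parentEdge ⁻¹' {f | IsArborescence f} =
      {c : Fin n → WheelStep a | CyclicallyAvoids next prev c} \
        {fun _ => next, fun _ => prev} := by
    ext c
    simp [isArborescence_parentEdge_iff]
  have ht : (wheelGraph n a).t = (parentEdge ⁻¹' {f | IsArborescence f}).ncard :=
    (t_eq_ncard_isArborescence _).trans <| Eq.symm <|
      Set.ncard_preimage_of_injective_subset_range (parentEdge_injective hn)
        fun _ hf => IsArborescence.exists_parentEdge_eq hf
  rw [ht, hpreimage, ← Set.ncard_sdiff_add_ncard_of_subset hconst,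
    Set.ncard_pair fun h => hne (congrFun h 0)]

open Polynomial in
theorem t_wheelGraph {R : Type*} [CommRing R] {n : ℕ} (hn : 2 ≤ n) (a : ℕ) :
    ((wheelGraph n a).t : R) = (dickson 1 1 n).eval (a + 2 : R) - 2 := by
  have : NeZero n := ⟨by omega⟩
  have hcount := ncard_cyclicallyAvoids (R := R) (x := (next : WheelStep a)) (y := prev) nofun n
  rw [← t_wheelGraph_add_two hn, WheelStep.card_eq] at hcount
  push_cast at hcount
  exact eq_sub_of_add_eq hcount

end WMG

/-- For integers `a ≥ 1` and `n ≥ 2`, the modified wheel graph satisfies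
`t(W̄_n) = a ⬝ W_{n-1}(a)` where
`W_m(x) = ∑_{k=0}^m ((2m+2)/(m+2+k)) C(m+2+k, m-k) x^k`;
in particular `t(W_n) = L_{2n} - 2` (Lucas numbers). -/
theorem spanning_trees_of_wheel (n a : ℕ) (hn : 2 ≤ n) (ha : 1 ≤ a) :
    ((WMG.wheelGraph n a).t : ℝ) = (a : ℝ) * wheelPoly (n - 1) (a : ℝ) ∧
    (WMG.wheelGraph n 1).t = lucas (2 * n) - 2 := by
  constructor
  · obtain ⟨m, rfl⟩ := Nat.exists_eq_add_of_le' (one_le_two.trans hn)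
    rw [WMG.t_wheelGraph hn, eval_dickson_add_two, add_sub_cancel_left, Nat.add_sub_cancel]
  · have hlucas : ((WMG.wheelGraph n 1).t : ℤ) = lucas (2 * n) - 2 := by
      rw [WMG.t_wheelGraph hn, ← eval_three_dickson]
      norm_num
    omega
end
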